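/- Let 0 < α < 1, let A be a real s×s matrix all of whose (complex) eigenvalues λ satisfy λ ≠ 0 and |arg λ| > απ/2, let Q : [0,∞) → ℝ^{s×s} be continuous and bounded, let g : [0,∞) → ℝ^s be continuous with sup_{t≥0} t^{1-α} ∫₀^t (t-τ)^{α-1} ‖E_{α,α}((t-τ)^α A) g(τ)‖ dτ < ∞, and fix x₀ ∈ ℝ^s. Then the operator (T_{x₀}ξ)(t) := t^{α-1} E_{α,α}(t^α A) x₀ + ∫₀^t (t-τ)^{α-1} E_{α,α}((t-τ)^α A) Q(τ) ξ(τ) dτ + ∫₀^t (t-τ)^{α-1} E_{α,α}((t-τ)^α A) g(τ) dτ maps C⁰_{1-α}([0,∞), ℝ^s) into itself, i.e. for every ξ ∈ C⁰_{1-α}([0,∞), ℝ^s) the function T_{x₀}ξ is continuous on (0,∞), lim_{t→0⁺} t^{1-α}(T_{x₀}ξ)(t) exists, and sup_{t≥0} t^{1-α} ‖(T_{x₀}ξ)(t)‖ < ∞. -/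

import Mathlib

open Filter Topology MeasureTheory

attribute [local instance] Matrix.linftyOpNormedAddCommGroup Matrix.linftyOpNormedRing

/-- The matrix Mittag-Leffler function `E_{α,β}(B) = ∑ Bᵏ / Γ(αk + β)`. -/
noncomputable def ML {s : ℕ} (α β : ℝ) (B : Matrix (Fin s) (Fin s) ℝ) :
    Matrix (Fin s) (Fin s) ℝ :=
  ∑' k : ℕ, (Real.Gamma (α * k + β))⁻¹ • B ^ k

/-- Membership in `C⁰_{1-α}([0,∞), ℝ^s)`: continuous on `(0,∞)`, the limit
`lim_{t→0⁺} t^{1-α} x(t)` exists, and `sup_{t≥0} t^{1-α} ‖x(t)‖ < ∞`. -/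
def memC0inf (α : ℝ) {s : ℕ} (x : ℝ → (Fin s → ℝ)) : Prop :=
  ContinuousOn x (Set.Ioi 0) ∧
  (∃ l : Fin s → ℝ, Tendsto (fun t : ℝ => t ^ (1 - α) • x t) (𝓝[>] 0) (𝓝 l)) ∧
  (∃ C : ℝ, ∀ t : ℝ, 0 ≤ t → t ^ (1 - α) * ‖x t‖ ≤ C)

/-- The operator `T_{x₀}` of the variation-of-constants equation. -/
noncomputable def Tfull {s : ℕ} (α : ℝ) (A : Matrix (Fin s) (Fin s) ℝ)
    (Q : ℝ → Matrix (Fin s) (Fin s) ℝ) (g : ℝ → (Fin s → ℝ)) (x₀ : Fin s → ℝ)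
    (ξ : ℝ → (Fin s → ℝ)) (t : ℝ) : Fin s → ℝ :=
  t ^ (α - 1) • (ML α α (t ^ α • A)).mulVec x₀
    + (∫ τ in (0:ℝ)..t, (t - τ) ^ (α - 1) •
        (ML α α ((t - τ) ^ α • A) * Q τ).mulVec (ξ τ))
    + ∫ τ in (0:ℝ)..t, (t - τ) ^ (α - 1) •
        (ML α α ((t - τ) ^ α • A)).mulVec (g τ)


section Hankel

open Complex in
/-- contour functional -/
noncomputable def JJ {E : Type*} [NormedAddCommGroup E] [NormedSpace ℂ E] (θ R : ℝ) (F : ℂ → E) : E :=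
  I • (∫ y in (-θ)..θ, F (R + y * I)) +
    ((∫ x in Set.Ioi R, F (x + θ * I)) - ∫ x in Set.Ioi R, F (x + (-θ : ℝ) * I))

variable {E : Type*} [NormedAddCommGroup E] [NormedSpace ℂ E]

lemma expdec_Ioi (R : ℝ) : IntegrableOn (fun x : ℝ => Real.exp (-x)) (Set.Ioi R) := by
  simpa using integrableOn_exp_mul_Ioi (a := -1) (by norm_num) R

lemma ray_cont {F : ℂ → E} {φ : ℝ} (hd : ∀ x : ℝ, DifferentiableAt ℂ F (x + φ * Complex.I)) :
    Continuous (fun x : ℝ => F (x + φ * Complex.I)) := by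
  rw [continuous_iff_continuousAt]
  intro x
  have h1 : ContinuousAt F ((x:ℂ) + φ * Complex.I) := (hd x).continuousAt
  exact ContinuousAt.comp (f := fun x : ℝ => (x:ℂ) + φ * Complex.I) h1 (by fun_prop)

lemma ray_int {F : ℂ → E} {φ R C : ℝ} (hd : ∀ x : ℝ, DifferentiableAt ℂ F (x + φ * Complex.I))
    (hb : ∀ x : ℝ, R ≤ x → ‖F (x + φ * Complex.I)‖ ≤ C * Real.exp (-x)) :
    IntegrableOn (fun x : ℝ => F (x + φ * Complex.I)) (Set.Ioi R) := by
  refine Integrable.mono' ((expdec_Ioi R).const_mul C) ?_ ?_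
  · exact (ray_cont hd).aestronglyMeasurable
  · exact (ae_restrict_iff' measurableSet_Ioi).2 (Eventually.of_forall fun x hx => hb x (le_of_lt hx))

lemma line_int {F : ℂ → E} {φ C C' δ : ℝ} (hδ : 0 < δ)
    (hd : ∀ x : ℝ, DifferentiableAt ℂ F (x + φ * Complex.I))
    (hb : ∀ x : ℝ, 0 ≤ x → ‖F (x + φ * Complex.I)‖ ≤ C * Real.exp (-x))
    (hl : ∀ x : ℝ, x ≤ 0 → ‖F (x + φ * Complex.I)‖ ≤ C' * Real.exp (δ * x)) :
    Integrable (fun x : ℝ => F (x + φ * Complex.I)) := by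
  rw [← integrableOn_univ, ← Set.Iic_union_Ioi (a := (0:ℝ))]
  refine IntegrableOn.union ?_ (ray_int hd hb)
  refine Integrable.mono' ((integrableOn_exp_mul_Iic hδ 0).const_mul C') ?_ ?_
  · exact (ray_cont hd).aestronglyMeasurable
  · exact (ae_restrict_iff' measurableSet_Iic).2 (Eventually.of_forall fun x hx => hl x hx)

lemma rect {F : ℂ → E} {a b R R' : ℝ} (hab : a ≤ b) 
    (hd : ∀ w : ℂ, a ≤ w.im → w.im ≤ b → DifferentiableAt ℂ F w) :
    (((∫ x in R..R', F (x + a * Complex.I)) - ∫ x in R..R', F (x + b * Complex.I)) +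
          Complex.I • ∫ y in a..b, F (R' + y * Complex.I)) -
        Complex.I • ∫ y in a..b, F (R + y * Complex.I) = 0 := by
  have := Complex.integral_boundary_rect_eq_zero_of_differentiableOn F (R + a * Complex.I) (R' + b * Complex.I)
  simp at this
  apply this
  intro w hw
  rw [Complex.mem_reProdIm, Set.uIcc_of_le hab] at hw
  exact (hd w hw.2.1 hw.2.2).differentiableWithinAt

lemma JJ_eq {F : ℂ → E} {θ : ℝ} (hθ : 0 ≤ θ)
    (hd : ∀ w : ℂ, |w.im| ≤ θ → DifferentiableAt ℂ F w)
    (hb : ∀ R, ∃ C, ∀ w : ℂ, |w.im| = θ → R ≤ w.re → ‖F w‖ ≤ C * Real.exp (-w.re))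
    {R R' : ℝ} (hR : R ≤ R') : JJ θ R F = JJ θ R' F := by
  obtain ⟨C, hC⟩ := hb R
  have h1 : IntegrableOn (fun x : ℝ => F (x + θ * Complex.I)) (Set.Ioi R) :=
    ray_int (C := C) (fun x => hd _ (by simp [abs_of_nonneg hθ])) (fun x hx => by
      simpa using hC (x + θ * Complex.I) (by simp [abs_of_nonneg hθ]) (by simpa using hx))
  have h2 : IntegrableOn (fun x : ℝ => F (x + (-θ:ℝ) * Complex.I)) (Set.Ioi R) :=
    ray_int (C := C) (fun x => hd _ (by simp [abs_of_nonneg hθ])) (fun x hx => by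
      simpa using hC (x + (-θ:ℝ) * Complex.I) (by simp [abs_of_nonneg hθ]) (by simpa using hx))
  have e1 := intervalIntegral.integral_Ioi_sub_Ioi h1 hR
  have e2 := intervalIntegral.integral_Ioi_sub_Ioi h2 hR
  have e3 := rect (F := F) (a := -θ) (b := θ) (R := R) (R' := R') (by linarith)
    (fun w h1 h2 => hd w (abs_le.2 ⟨h1, h2⟩))
  rw [← e1, ← e2] at e3
  unfold JJ
  rw [← sub_eq_zero, ← neg_eq_zero, ← e3]
  abel

lemma JJ_lim {F : ℂ → E} {θ : ℝ} (hθ : 0 ≤ θ)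
    (hd : ∀ w : ℂ, |w.im| ≤ θ → DifferentiableAt ℂ F w)
    (hb : ∀ R, ∃ C, ∀ w : ℂ, |w.im| = θ → R ≤ w.re → ‖F w‖ ≤ C * Real.exp (-w.re))
    {C δ : ℝ} (hδ : 0 < δ) (hl : ∀ w : ℂ, |w.im| ≤ θ → w.re ≤ 0 → ‖F w‖ ≤ C * Real.exp (δ * w.re))
    (R : ℝ) : JJ θ R F = (∫ x : ℝ, F (x + θ * Complex.I)) - ∫ x : ℝ, F (x + (-θ : ℝ) * Complex.I) := by
  obtain ⟨D, hD⟩ := hb 0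
  have h1 : Integrable (fun x : ℝ => F (x + θ * Complex.I)) :=
    line_int (C := D) (C' := C) hδ (fun x => hd _ (by simp [abs_of_nonneg hθ])) (fun x hx => by
      simpa using hD (x + θ * Complex.I) (by simp [abs_of_nonneg hθ]) (by simpa using hx))
      (fun x hx => by
      simpa using hl (x + θ * Complex.I) (by simp [abs_of_nonneg hθ]) (by simpa using hx))
  have h2 : Integrable (fun x : ℝ => F (x + (-θ:ℝ) * Complex.I)) :=
    line_int (C := D) (C' := C) hδ (fun x => hd _ (by simp [abs_of_nonneg hθ])) (fun x hx => by
      simpa using hD (x + (-θ:ℝ) * Complex.I) (by simp [abs_of_nonneg hθ]) (by simpa using hx))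
      (fun x hx => by
      simpa using hl (x + (-θ:ℝ) * Complex.I) (by simp [abs_of_nonneg hθ]) (by simpa using hx))
  have t1 := (aecover_Ioi (μ := (volume : Measure ℝ)) (tendsto_id (x := (atBot : Filter ℝ)))).integral_tendsto_of_countably_generated h1
  have t2 := (aecover_Ioi (μ := (volume : Measure ℝ)) (tendsto_id (x := (atBot : Filter ℝ)))).integral_tendsto_of_countably_generated h2
  have t3 : Tendsto (fun r : ℝ => Complex.I • (∫ y in (-θ)..θ, F (r + y * Complex.I))) atBot (𝓝 0) := by
    have hz : Tendsto (fun r : ℝ => C * Real.exp (δ * r) * |θ - (-θ)|) atBot (𝓝 0) := by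
      have : Tendsto (fun r : ℝ => Real.exp (δ * r)) atBot (𝓝 0) :=
        Real.tendsto_exp_atBot.comp (tendsto_id.const_mul_atBot hδ)
      simpa using (this.const_mul C).mul_const (|θ - (-θ)|)
    refine squeeze_zero_norm' ?_ hz
    filter_upwards [eventually_le_atBot (0:ℝ)] with r hr
    rw [norm_smul, Complex.norm_I, one_mul]
    refine intervalIntegral.norm_integral_le_of_norm_le_const fun y hy => ?_
    rw [Set.uIoc_of_le (by linarith)] at hy
    simpa using hl (r + y * Complex.I) (by simpa [abs_le] using ⟨hy.1.le, hy.2⟩) (by simpa using hr)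
  have t4 := t3.add (t1.sub t2)
  rw [zero_add] at t4
  refine tendsto_nhds_unique (tendsto_const_nhds (x := JJ θ R F)) (t4.congr' ?_)
  filter_upwards [eventually_le_atBot R] with r hr
  rw [← JJ_eq hθ hd hb hr]
  rfl

lemma line_shift {F : ℂ → E} {a b : ℝ} (hab : a ≤ b)
    (hd : ∀ w : ℂ, a ≤ w.im → w.im ≤ b → DifferentiableAt ℂ F w)
    {D C δ : ℝ} (hδ : 0 < δ)
    (hb : ∀ w : ℂ, a ≤ w.im → w.im ≤ b → 0 ≤ w.re → ‖F w‖ ≤ D * Real.exp (-w.re))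
    (hl : ∀ w : ℂ, a ≤ w.im → w.im ≤ b → w.re ≤ 0 → ‖F w‖ ≤ C * Real.exp (δ * w.re)) :
    (∫ x : ℝ, F (x + a * Complex.I)) = ∫ x : ℝ, F (x + b * Complex.I) := by
  have key : ∀ φ : ℝ, a ≤ φ → φ ≤ b → Integrable (fun x : ℝ => F (x + φ * Complex.I)) := fun φ h1 h2 =>
    line_int (C := D) (C' := C) hδ (fun x => hd _ (by simpa) (by simpa)) (fun x hx => by
      simpa using hb (x + φ * Complex.I) (by simpa) (by simpa) (by simpa using hx))
      (fun x hx => by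
      simpa using hl (x + φ * Complex.I)  (by simpa) (by simpa) (by simpa using hx))
  have t1 := intervalIntegral_tendsto_integral (key a le_rfl hab) (tendsto_neg_atTop_atBot (G := ℝ)) tendsto_id
  have t2 := intervalIntegral_tendsto_integral (key b hab le_rfl) (tendsto_neg_atTop_atBot (G := ℝ)) tendsto_id
  have t3 : Tendsto (fun r : ℝ => Complex.I • (∫ y in a..b, F (r + y * Complex.I))) atTop (𝓝 0) := by
    have hz : Tendsto (fun r : ℝ => D * Real.exp (-r) * |b - a|) atTop (𝓝 0) := by
      have : Tendsto (fun r : ℝ => Real.exp (-r)) atTop (𝓝 0) := Real.tendsto_exp_neg_atTop_nhds_zero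
      simpa using (this.const_mul D).mul_const (|b - a|)
    refine squeeze_zero_norm' ?_ hz
    filter_upwards [eventually_ge_atTop (0:ℝ)] with r hr
    rw [norm_smul, Complex.norm_I, one_mul]
    refine intervalIntegral.norm_integral_le_of_norm_le_const fun y hy => ?_
    rw [Set.uIoc_of_le (by linarith)] at hy
    simpa using hb (r + y * Complex.I) (by simpa using hy.1.le) (by simpa using hy.2) (by simpa using hr)
  have t4 : Tendsto (fun r : ℝ => Complex.I • (∫ y in a..b, F ((-r : ℝ) + y * Complex.I))) atTop (𝓝 0) := by
    have hz : Tendsto (fun r : ℝ => C * Real.exp (δ * (-r)) * |b - a|) atTop (𝓝 0) := by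
      have : Tendsto (fun r : ℝ => Real.exp (δ * (-r))) atTop (𝓝 0) :=
        Real.tendsto_exp_atBot.comp (tendsto_neg_atTop_atBot.const_mul_atBot hδ)
      simpa using (this.const_mul C).mul_const (|b - a|)
    refine squeeze_zero_norm' ?_ hz
    filter_upwards [eventually_ge_atTop (0:ℝ)] with r hr
    rw [norm_smul, Complex.norm_I, one_mul]
    refine intervalIntegral.norm_integral_le_of_norm_le_const fun y hy => ?_
    rw [Set.uIoc_of_le (by linarith)] at hy
    simpa using hl ((-r:ℝ) + y * Complex.I) (by simpa using hy.1.le) (by simpa using hy.2) (by simpa using hr)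
  have t5 := ((t1.sub t2).add t3).sub t4
  rw [add_zero, sub_zero] at t5
  refine sub_eq_zero.1 (tendsto_nhds_unique t5 (tendsto_const_nhds.congr fun r => ?_))
  exact (rect (F := F) (R := -r) (R' := r) hab hd).symm

/-- FTC for the contour functional -/
lemma JJ_deriv {F G : ℂ → ℂ} {θ : ℝ} (hθ : 0 ≤ θ)
    (hG : ∀ w : ℂ, |w.im| ≤ θ → HasDerivAt G (F w) w)
    (hd : ∀ w : ℂ, |w.im| ≤ θ → DifferentiableAt ℂ F w)
    (hb : ∀ R, ∃ C, ∀ w : ℂ, |w.im| = θ → R ≤ w.re → ‖F w‖ ≤ C * Real.exp (-w.re))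
    (hbG : ∀ R, ∃ C, ∀ w : ℂ, |w.im| = θ → R ≤ w.re → ‖G w‖ ≤ C * Real.exp (-w.re))
    (R : ℝ) : JJ θ R F = 0 := by
  obtain ⟨C, hC⟩ := hb R
  obtain ⟨D, hD⟩ := hbG R
  have key : ∀ φ : ℝ, |φ| = θ → (∫ x in Set.Ioi R, F (x + φ * Complex.I)) = 0 - G (R + φ * Complex.I) := by
    intro φ hφ
    have hder : ∀ x : ℝ, HasDerivAt (fun x : ℝ => G (x + φ * Complex.I)) (F (x + φ * Complex.I)) x := by
      intro x
      have := (hG (x + φ * Complex.I) (by simp [hφ])).comp_add_const (x:ℂ) (φ * Complex.I)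
      exact this.comp_ofReal
    refine integral_Ioi_of_hasDerivAt_of_tendsto (f := fun x : ℝ => G (x + φ * Complex.I)) 
      (hder R).continuousAt.continuousWithinAt (fun x _ => hder x)
      (ray_int (C := C) (fun x => hd _ (by simp [hφ])) (fun x hx => by
      simpa using hC (x + φ * Complex.I) (by simp [hφ]) (by simpa using hx))) ?_
    refine squeeze_zero_norm' (a := fun x : ℝ => D * Real.exp (-x)) ?_ ?_
    · filter_upwards [eventually_ge_atTop R] with x hx
      simpa using hD (x + φ * Complex.I) (by simp [hφ]) (by simpa using hx)
    · simpa using Real.tendsto_exp_neg_atTop_nhds_zero.const_mul D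
  have k2 : Complex.I • (∫ y in (-θ)..θ, F (R + y * Complex.I)) = G (R + θ * Complex.I) - G (R + (-θ:ℝ) * Complex.I) := by
    rw [← intervalIntegral.integral_smul]
    have hcont : ContinuousOn (fun y : ℝ => Complex.I • F (R + y * Complex.I)) (Set.uIcc (-θ) θ) := by
      intro y hy
      rw [Set.uIcc_of_le (by linarith)] at hy
      have h1 : ContinuousAt F (R + y * Complex.I) := (hd _ (by simpa [abs_le] using hy)).continuousAt
      exact (ContinuousAt.const_smul (ContinuousAt.comp (f := fun y : ℝ => (R:ℂ) + y * Complex.I) h1 (by fun_prop)) Complex.I).continuousWithinAt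
    refine intervalIntegral.integral_eq_sub_of_hasDerivAt (f := fun y : ℝ => G (R + y * Complex.I)) ?_ hcont.intervalIntegrable
    intro y hy
    rw [Set.uIcc_of_le (by linarith)] at hy
    have h1 := hG (R + y * Complex.I) (by simpa [abs_le] using hy)
    have h2 : HasDerivAt (fun z : ℂ => (R:ℂ) + z * Complex.I) Complex.I (y:ℂ) := by
      simpa using ((hasDerivAt_id (y:ℂ)).mul_const Complex.I).const_add (R:ℂ)
    exact (HasDerivAt.scomp (y:ℂ) h1 h2).comp_ofReal
  unfold JJ
  rw [k2, key θ (abs_of_nonneg hθ), key (-θ) (by simp [abs_of_nonneg hθ])]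
  abel

end Hankel

section Hankel2

/-- scalar kernel -/
noncomputable def hk (z : ℝ) (w : ℂ) : ℂ := Complex.exp (Complex.exp w) * Complex.exp ((1 - z : ℝ) * w)

lemma hk_diff (z : ℝ) (w : ℂ) : DifferentiableAt ℂ (hk z) w := by
  unfold hk; fun_prop

lemma hk_norm (z : ℝ) (w : ℂ) :
    ‖hk z w‖ = Real.exp (Real.exp w.re * Real.cos w.im) * Real.exp ((1 - z) * w.re) := by
  unfold hk
  rw [norm_mul, Complex.norm_exp, Complex.norm_exp, Complex.exp_re, Complex.re_ofReal_mul]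

lemma rayB {c : ℝ} (hc : 0 < c) (β R : ℝ) :
    ∃ C, 0 ≤ C ∧ ∀ x, R ≤ x → Real.exp (Real.exp x * (-c)) * Real.exp (β * x) ≤ C * Real.exp (-x) := by
  have t : Tendsto (fun x : ℝ => Real.exp (Real.exp x * (-c)) * Real.exp ((β + 1) * x)) atTop (𝓝 0) := by
    have := (tendsto_rpow_mul_exp_neg_mul_atTop_nhds_zero (β + 1) c hc).comp Real.tendsto_exp_atTop
    refine this.congr fun x => ?_
    simp only [Function.comp]
    rw [← Real.exp_mul, mul_comm]
    congr 2 <;> ring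
  obtain ⟨N, hN⟩ := (eventually_atTop.1 (t.eventually (eventually_le_nhds (b := (1:ℝ)) one_pos)))
  have hcont : ContinuousOn (fun x : ℝ => Real.exp (Real.exp x * (-c)) * Real.exp ((β + 1) * x)) (Set.Icc R N) := by fun_prop
  obtain ⟨M, hM⟩ := (isCompact_Icc.image_of_continuousOn hcont).bddAbove
  refine ⟨max 1 M, le_trans zero_le_one (le_max_left _ _), fun x hx => ?_⟩
  have h1 : Real.exp (Real.exp x * (-c)) * Real.exp ((β + 1) * x) ≤ max 1 M := by
    rcases le_total N x with h | h
    · exact (hN x h).trans (le_max_left _ _)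
    · exact (hM ⟨x, ⟨hx, h⟩, rfl⟩).trans (le_max_right _ _)
  have h2 : Real.exp (β * x) = Real.exp ((β + 1) * x) * Real.exp (-x) := by
    rw [← Real.exp_add]; congr 1; ring
  rw [h2, ← mul_assoc]
  exact mul_le_mul_of_nonneg_right h1 (Real.exp_pos _).le

lemma cosneg {θ : ℝ} (h1 : Real.pi / 2 < θ) (h2 : θ < Real.pi) : 0 < - Real.cos θ := by
  have := Real.cos_neg_of_pi_div_two_lt_of_lt h1 (by linarith)
  linarith

lemma hk_b {θ : ℝ} (h1 : Real.pi / 2 < θ) (h2 : θ < Real.pi) (z R : ℝ) :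
    ∃ C, 0 ≤ C ∧ ∀ w : ℂ, θ ≤ |w.im| → |w.im| ≤ Real.pi → R ≤ w.re → ‖hk z w‖ ≤ C * Real.exp (-w.re) := by
  obtain ⟨C, hC0, hC⟩ := rayB (cosneg h1 h2) (1 - z) R
  refine ⟨C, hC0, fun w hw hw' hR => ?_⟩
  rw [hk_norm]
  refine le_trans ?_ (hC _ hR)
  have : Real.cos w.im ≤ Real.cos θ := by
    rw [← Real.cos_abs w.im]
    exact Real.cos_le_cos_of_nonneg_of_le_pi (by linarith [Real.pi_pos]) hw' hw
  gcongr
  linarith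

lemma hk_b' {θ : ℝ} (h1 : Real.pi / 2 < θ) (h2 : θ < Real.pi) (z : ℝ) :
    ∀ R, ∃ C, ∀ w : ℂ, |w.im| = θ → R ≤ w.re → ‖hk z w‖ ≤ C * Real.exp (-w.re) := by
  intro R
  obtain ⟨C, _, hC⟩ := hk_b h1 h2 z R
  exact ⟨C, fun w hw => hC w hw.ge (hw.le.trans h2.le)⟩

lemma hk_l (z : ℝ) (w : ℂ) (hw : w.re ≤ 0) : ‖hk z w‖ ≤ Real.exp 1 * Real.exp ((1 - z) * w.re) := by
  rw [hk_norm]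
  have h1 : Real.exp w.re ≤ 1 := Real.exp_le_one_iff.2 hw
  have h2 : Real.exp w.re * Real.cos w.im ≤ 1 := by
    have := Real.cos_le_one w.im
    nlinarith [Real.exp_pos w.re]
  gcongr

lemma gamma_line {β : ℝ} (hβ : 0 < β) :
    ∫ x : ℝ, Real.exp (-Real.exp x) * Real.exp (β * x) = Real.Gamma β := by
  rw [Real.Gamma_eq_integral hβ]
  have := integral_image_eq_integral_abs_deriv_smul (s := Set.univ) (f := Real.exp) (f' := Real.exp) MeasurableSet.univ
    (fun x _ => (Real.hasDerivAt_exp x).hasDerivWithinAt) Real.exp_injective.injOn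
    (fun x => Real.exp (-x) * x ^ (β - 1))
  rw [Set.image_univ, Real.range_exp, setIntegral_univ] at this
  rw [this]
  congr 1
  ext x
  rw [abs_of_pos (Real.exp_pos _), smul_eq_mul, ← Real.exp_mul, ← Real.exp_add, ← Real.exp_add, ← Real.exp_add]
  congr 1; ring

lemma hk_line {z : ℝ} (hz : z < 1) (φ : ℝ) (hφ : Complex.exp (φ * Complex.I) = -1) :
    ∫ x : ℝ, hk z (x + φ * Complex.I) = Complex.exp ((1 - z : ℝ) * φ * Complex.I) * Real.Gamma (1 - z) := by
  rw [← gamma_line (by linarith : 0 < 1 - z), ← integral_complex_ofReal, ← integral_const_mul]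
  congr 1
  ext x
  unfold hk
  rw [Complex.exp_add, hφ]
  push_cast
  rw [← Complex.exp_add, ← Complex.exp_add, ← Complex.exp_add]
  congr 1
  ring

lemma hankel1 {θ : ℝ} (h1 : Real.pi / 2 < θ) (h2 : θ < Real.pi) {z : ℝ} (hz0 : 0 < z) (hz1 : z < 1) (R : ℝ) :
    JJ θ R (hk z) = 2 * Real.pi * Complex.I * ((Real.Gamma z)⁻¹ : ℝ) := by
  have hθ : 0 ≤ θ := by linarith [Real.pi_pos]
  obtain ⟨D, _, hD⟩ := hk_b h1 h2 z 0
  rw [JJ_lim hθ (fun w _ => hk_diff z w) (hk_b' h1 h2 z) (δ := 1 - z) (by linarith)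
    (fun w _ hw => hk_l z w hw)]
  rw [line_shift (a := θ) (b := Real.pi) h2.le (fun w _ _ => hk_diff z w) (δ := 1 - z) (by linarith) (D := D)
    (fun w ha hb hw => hD w (ha.trans (le_abs_self _)) (abs_le.2 ⟨by linarith, hb⟩) hw)
    (fun w _ _ hw => hk_l z w hw)]
  rw [← line_shift (a := -Real.pi) (b := -θ) (by linarith) (fun w _ _ => hk_diff z w) (δ := 1 - z) (by linarith) (D := D)
    (fun w ha hb hw => hD w (by linarith [neg_le_abs w.im]) (abs_le.2 ⟨ha, by linarith⟩) hw)
    (fun w _ _ hw => hk_l z w hw)]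
  rw [hk_line hz1 Real.pi Complex.exp_pi_mul_I, hk_line hz1 (-Real.pi) (by
    push_cast; rw [neg_mul, Complex.exp_neg, Complex.exp_pi_mul_I]; norm_num)]
  have hs : Real.sin (Real.pi * z) ≠ 0 :=
    (Real.sin_pos_of_pos_of_lt_pi (by positivity) (by nlinarith [Real.pi_pos])).ne'
  have hG : (Real.Gamma z)⁻¹ = Real.Gamma (1 - z) * Real.sin (Real.pi * z) / Real.pi := by
    have := Real.Gamma_mul_Gamma_one_sub z
    have hp := (Real.Gamma_pos_of_pos hz0).ne'
    have hpi := Real.pi_pos.ne'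
    rw [eq_div_iff hs] at this
    rw [inv_eq_one_div, div_eq_div_iff hp hpi]
    linarith
  rw [hG]
  have e1 : (((1 - z : ℝ):ℂ) * Real.pi * Complex.I) = Real.pi * Complex.I + ((-(Real.pi * z) : ℝ) : ℂ) * Complex.I := by
    push_cast; ring
  have e2 : (((1 - z : ℝ):ℂ) * (-Real.pi : ℝ) * Complex.I) = -(Real.pi * Complex.I) + ((Real.pi * z : ℝ):ℂ) * Complex.I := by
    push_cast; ring
  rw [e1, e2, Complex.exp_add, Complex.exp_add, Complex.exp_neg, Complex.exp_pi_mul_I, Complex.exp_mul_I, Complex.exp_mul_I]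
  rw [← Complex.ofReal_cos, ← Complex.ofReal_cos, ← Complex.ofReal_sin, ← Complex.ofReal_sin, Real.cos_neg, Real.sin_neg]
  have hpi : (Real.pi : ℂ) ≠ 0 := by exact_mod_cast Real.pi_pos.ne'
  push_cast
  field_simp
  ring

lemma JJ_hk_int {θ : ℝ} (h1 : Real.pi / 2 < θ) (h2 : θ < Real.pi) (z R : ℝ) {φ : ℝ} (hφ : |φ| = θ) :
    IntegrableOn (fun x : ℝ => hk z (x + φ * Complex.I)) (Set.Ioi R) := by
  obtain ⟨C, hC⟩ := hk_b' h1 h2 z R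
  exact ray_int (C := C) (fun x => hk_diff _ _) (fun x hx => by
      simpa using hC (x + φ * Complex.I) (by simp [hφ]) (by simpa using hx))

lemma hankel_rec {θ : ℝ} (h1 : Real.pi / 2 < θ) (h2 : θ < Real.pi) (z : ℝ) (R : ℝ) :
    JJ θ R (hk z) = z * JJ θ R (hk (z + 1)) := by
  have hθ : 0 ≤ θ := by linarith [Real.pi_pos]
  have hder : ∀ w, HasDerivAt (hk (z + 1)) (hk z w - z * hk (z + 1) w) w := by
    intro w
    have a1 := (Complex.hasDerivAt_exp w).cexp.mul (((hasDerivAt_id w).const_mul ((1 - (z + 1) : ℝ) : ℂ)).cexp)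
    refine a1.congr_deriv ?_
    unfold hk
    have : Complex.exp (((1 - z : ℝ):ℂ) * w) = Complex.exp w * Complex.exp (((1 - (z+1) : ℝ):ℂ) * w) := by
      rw [← Complex.exp_add]; congr 1; push_cast; ring
    rw [this]
    simp only [id]
    push_cast
    ring
  have hb : ∀ R, ∃ C, ∀ w : ℂ, |w.im| = θ → R ≤ w.re → ‖hk z w - z * hk (z + 1) w‖ ≤ C * Real.exp (-w.re) := by
    intro R
    obtain ⟨C, hC⟩ := hk_b' h1 h2 z R
    obtain ⟨D, hD⟩ := hk_b' h1 h2 (z + 1) R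
    refine ⟨C + |z| * D, fun w hw hR => ?_⟩
    refine (norm_sub_le _ _).trans ?_
    rw [norm_mul, Complex.norm_real, Real.norm_eq_abs, add_mul, mul_assoc]
    exact add_le_add (hC w hw hR) (mul_le_mul_of_nonneg_left (hD w hw hR) (abs_nonneg _))
  have key := JJ_deriv (F := fun w => hk z w - z * hk (z + 1) w) (G := hk (z + 1)) hθ (fun w _ => hder w)
    (fun w _ => (hk_diff z w).sub ((hk_diff _ w).const_mul _)) hb (hk_b' h1 h2 (z + 1)) R
  have i1 := fun z => JJ_hk_int h1 h2 z R (φ := θ) (abs_of_nonneg hθ)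
  have i2 := fun z => JJ_hk_int h1 h2 z R (φ := -θ) (by simp [abs_of_nonneg hθ])
  have i3 : ∀ z, IntervalIntegrable (fun y : ℝ => hk z (R + y * Complex.I)) volume (-θ) θ := fun z => by
    apply Continuous.intervalIntegrable
    unfold hk; fun_prop
  unfold JJ at key ⊢
  rw [integral_sub (i1 z) ((i1 (z+1)).const_mul _), integral_sub (i2 z) ((i2 (z+1)).const_mul _),
    intervalIntegral.integral_sub (i3 z) ((i3 (z+1)).const_mul _), intervalIntegral.integral_const_mul,
    integral_const_mul, integral_const_mul] at key
  simp only [smul_eq_mul] at key ⊢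
  linear_combination key

lemma hankel_cont {θ : ℝ} (h1 : Real.pi / 2 < θ) (h2 : θ < Real.pi) :
    ContinuousAt (fun z => JJ θ 0 (hk z)) 1 := by
  have hθ : 0 ≤ θ := by linarith [Real.pi_pos]
  have hray : ∀ φ : ℝ, |φ| = θ → ContinuousAt (fun z => ∫ x in Set.Ioi (0:ℝ), hk z (x + φ * Complex.I)) 1 := by
    intro φ hφ
    obtain ⟨C, hC⟩ := hk_b' h1 h2 0 0
    refine continuousAt_of_dominated (bound := fun x => C * Real.exp (-x)) ?_ ?_ ((expdec_Ioi 0).const_mul C) ?_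
    · exact Eventually.of_forall fun z => (JJ_hk_int h1 h2 z 0 hφ).aestronglyMeasurable
    · filter_upwards [eventually_ge_nhds (one_pos (α := ℝ))] with z hz
      refine (ae_restrict_iff' measurableSet_Ioi).2 (Eventually.of_forall fun x hx => ?_)
      have hx : 0 < x := hx
      have := hC (x + φ * Complex.I) (by simp [hφ]) (by simpa using hx.le)
      simp only [hk_norm] at this ⊢
      simp only [Complex.add_re, Complex.ofReal_re, Complex.re_ofReal_mul, Complex.I_re, mul_zero, add_zero] at this ⊢
      refine le_trans ?_ this
      gcongr
    · refine Eventually.of_forall fun x => ?_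
      unfold hk; fun_prop
  unfold JJ
  refine ContinuousAt.add ?_ ((hray θ (abs_of_nonneg hθ)).sub (hray (-θ) (by simp [abs_of_nonneg hθ])))
  refine ContinuousAt.const_smul (Continuous.continuousAt ?_) Complex.I
  apply intervalIntegral.continuous_parametric_intervalIntegral_of_continuous'
  unfold hk
  simp only [Function.uncurry_def]
  fun_prop

lemma hankel_R {θ : ℝ} (h1 : Real.pi / 2 < θ) (h2 : θ < Real.pi) (z R : ℝ) :
    JJ θ R (hk z) = JJ θ 0 (hk z) := by
  have hθ : 0 ≤ θ := by linarith [Real.pi_pos]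
  rcases le_total R 0 with h | h
  · exact JJ_eq hθ (fun w _ => hk_diff z w) (hk_b' h1 h2 z) h
  · exact (JJ_eq hθ (fun w _ => hk_diff z w) (hk_b' h1 h2 z) h).symm

lemma hankel_one {θ : ℝ} (h1 : Real.pi / 2 < θ) (h2 : θ < Real.pi) :
    JJ θ 0 (hk 1) = 2 * Real.pi * Complex.I * ((Real.Gamma 1)⁻¹ : ℝ) := by
  have t1 : Tendsto (fun z => JJ θ 0 (hk z)) (𝓝[<] 1) (𝓝 (JJ θ 0 (hk 1))) :=
    (hankel_cont h1 h2).tendsto.mono_left nhdsWithin_le_nhds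
  have t2 : Tendsto (fun z : ℝ => 2 * Real.pi * Complex.I * ((Real.Gamma z)⁻¹ : ℝ)) (𝓝[<] 1)
      (𝓝 (2 * Real.pi * Complex.I * ((Real.Gamma 1)⁻¹ : ℝ))) := by
    refine Tendsto.mono_left ?_ nhdsWithin_le_nhds
    refine Tendsto.const_mul _ ?_
    refine (Complex.continuous_ofReal.tendsto _).comp ?_
    refine Tendsto.inv₀ ?_ (Real.Gamma_pos_of_pos one_pos).ne'
    refine (Real.differentiableAt_Gamma fun m => ?_).continuousAt
    have : (0:ℝ) ≤ m := Nat.cast_nonneg m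
    linarith
  refine tendsto_nhds_unique t1 (t2.congr' ?_)
  filter_upwards [Ioo_mem_nhdsLT (zero_lt_one (α := ℝ))] with z hz
  exact (hankel1 h1 h2 hz.1 hz.2 0).symm

lemma hankel {θ : ℝ} (h1 : Real.pi / 2 < θ) (h2 : θ < Real.pi) {z : ℝ} (hz0 : 0 < z) (R : ℝ) :
    JJ θ R (hk z) = 2 * Real.pi * Complex.I * ((Real.Gamma z)⁻¹ : ℝ) := by
  rw [hankel_R h1 h2]
  have key : ∀ n : ℕ, ∀ z : ℝ, 0 < z → z ≤ n + 1 → 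
      JJ θ 0 (hk z) = 2 * Real.pi * Complex.I * ((Real.Gamma z)⁻¹ : ℝ) := by
    intro n
    induction n with
    | zero => 
      intro z hz hz1
      rcases lt_or_eq_of_le hz1 with h | h
      · exact hankel1 h1 h2 hz (by simpa using h) 0
      · have : z = 1 := by simpa using h
        rw [this]; exact hankel_one h1 h2
    | succ n ih =>
      intro z hz hz1
      rcases le_or_gt z 1 with h | h
      · exact ih z hz (by have : (0:ℝ) ≤ n := Nat.cast_nonneg n
                          linarith)
      · have e := hankel_rec h1 h2 (z - 1) 0
        rw [ih (z - 1) (by linarith) (by push_cast at hz1; linarith), sub_add_cancel] at e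
        have hz' : z - 1 ≠ 0 := by linarith
        have g := Real.Gamma_add_one hz'
        rw [sub_add_cancel] at g
        have hz'' : ((z - 1 : ℝ) : ℂ) ≠ 0 := by exact_mod_cast hz'
        rw [g, mul_inv]
        refine mul_left_cancel₀ hz'' ?_
        rw [← e, Complex.ofReal_mul, Complex.ofReal_inv (z - 1)]
        field_simp
  obtain ⟨n, hn⟩ := exists_nat_ge z
  exact key n z hz0 (by linarith)

lemma hankel_zero {θ : ℝ} (h1 : Real.pi / 2 < θ) (h2 : θ < Real.pi) (R : ℝ) :
    JJ θ R (hk 0) = 0 := by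
  rw [hankel_rec h1 h2]; simp

end Hankel2

set_option linter.unusedSectionVars false
section Banach

variable {𝔸 : Type*} [NormedRing 𝔸] [NormedAlgebra ℂ 𝔸] [CompleteSpace 𝔸] [NormOneClass 𝔸]

lemma geom_res (b : 𝔸) (z : ℂ) (h : ‖b‖ < ‖z‖) :
    HasSum (fun k : ℕ => (z⁻¹ ^ (k + 1)) • b ^ k) (resolvent b z) := by
  have hz : z ≠ 0 := by
    intro h0; rw [h0, norm_zero] at h; exact absurd h (not_lt.2 (norm_nonneg _))
  have hx : ‖z⁻¹ • b‖ < 1 := by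
    rw [norm_smul, norm_inv, inv_mul_lt_iff₀ (norm_pos_iff.2 hz), mul_one]; exact h
  have hs := (summable_geometric_of_norm_lt_one hx).hasSum
  have e1 := mul_neg_geom_series _ hx
  have e2 := geom_series_mul_neg _ hx
  set S := ∑' i : ℕ, (z⁻¹ • b) ^ i with hS
  have hfac : algebraMap ℂ 𝔸 z - b = z • (1 - z⁻¹ • b) := by
    rw [smul_sub, smul_smul, mul_inv_cancel₀ hz, one_smul, Algebra.algebraMap_eq_smul_one]
  have hres : resolvent b z = z⁻¹ • S := by
    unfold resolvent
    let u : 𝔸ˣ := ⟨algebraMap ℂ 𝔸 z - b, z⁻¹ • S, by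
      rw [hfac, smul_mul_smul_comm, mul_inv_cancel₀ hz, one_smul, e1], by
      rw [hfac, smul_mul_smul_comm, inv_mul_cancel₀ hz, one_smul, e2]⟩
    exact Ring.inverse_unit u
  rw [hres]
  refine (hs.const_smul z⁻¹).congr_fun ?_ |> fun h => h
  intro k
  rw [smul_pow, smul_smul, pow_succ']

/-- the kernel -/
noncomputable def FF (α : ℝ) (b : 𝔸) (w : ℂ) : 𝔸 := hk 0 w • resolvent b (Complex.exp (α * w))

lemma hk_mul (z z' : ℝ) (w : ℂ) : hk (z + z') w = hk z w * Complex.exp (-(z' * w)) := by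
  unfold hk
  rw [mul_assoc, ← Complex.exp_add, ← Complex.exp_add, ← Complex.exp_add]
  congr 1; push_cast; ring

lemma hk_pow (α : ℝ) (k : ℕ) (w : ℂ) :
    hk (α * k + α) w = hk 0 w * (Complex.exp (α * w))⁻¹ ^ (k + 1) := by
  rw [← Complex.exp_neg, ← Complex.exp_nat_mul, ← zero_add (α * k + α), hk_mul]
  congr 2; push_cast; ring

lemma hasSum_JJ {θ α : ℝ} (h1 : Real.pi / 2 < θ) (h2 : θ < Real.pi) (hα : 0 < α) (b : 𝔸) (R : ℝ)
    (hR : 2 * ‖b‖ + 1 ≤ Real.exp (α * R)) :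
    HasSum (fun k : ℕ => (2 * Real.pi * Complex.I * ((Real.Gamma (α * k + α))⁻¹ : ℝ)) • b ^ k)
      (JJ θ R (FF α b)) := by
  have hθ : 0 ≤ θ := by linarith [Real.pi_pos]
  have hexp : ∀ w : ℂ, ‖Complex.exp (α * w)‖ = Real.exp (α * w.re) := fun w => by
    rw [Complex.norm_exp, Complex.re_ofReal_mul]
  have hge : ∀ w : ℂ, R ≤ w.re → 2 * ‖b‖ + 1 ≤ ‖Complex.exp (α * w)‖ := fun w hw => by
    rw [hexp]; refine hR.trans ?_; gcongr
  have hsum : ∀ w : ℂ, R ≤ w.re → HasSum (fun k : ℕ => hk (α * k + α) w • b ^ k) (FF α b w) := by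
    intro w hw
    have := (geom_res b (Complex.exp (α * w)) (by linarith [hge w hw, norm_nonneg b])).const_smul (hk 0 w)
    refine this.congr_fun ?_ |> fun h => h
    intro k
    rw [smul_smul, hk_pow]
  have hbd : ∀ k : ℕ, ∀ w : ℂ, R ≤ w.re → ‖hk (α * k + α) w • b ^ k‖ ≤ ‖hk α w‖ * (1 / 2) ^ k := by
    intro k w hw
    have e1 : hk (α * k + α) w = hk α w * (Complex.exp (α * w))⁻¹ ^ k := by
      rw [hk_pow, pow_succ', ← mul_assoc]
      have := hk_pow α 0 w
      simp only [Nat.cast_zero, mul_zero, zero_add, pow_one] at this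
      rw [this]
    rw [norm_smul, e1, norm_mul, mul_assoc]
    refine mul_le_mul_of_nonneg_left ?_ (norm_nonneg _)
    calc ‖(Complex.exp (α * w))⁻¹ ^ k‖ * ‖b ^ k‖ ≤ ‖(Complex.exp (α * w))‖⁻¹ ^ k * ‖b‖ ^ k := by
          rw [norm_pow, norm_inv]
          exact mul_le_mul_of_nonneg_left (norm_pow_le b k) (by positivity)
      _ = (‖(Complex.exp (α * w))‖⁻¹ * ‖b‖) ^ k := by rw [mul_pow]
      _ ≤ (1/2) ^ k := by
          have := hge w hw
          have hp : 0 < ‖Complex.exp (α * w)‖ := by linarith [norm_nonneg b]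
          gcongr
          rw [inv_mul_le_iff₀ hp]; linarith
  have hgeo : HasSum (fun k : ℕ => ((1:ℝ) / 2) ^ k) 2 := hasSum_geometric_two
  have hts : ∀ c : ℝ, ∑' k : ℕ, c * ((1:ℝ)/2) ^ k = c * 2 := fun c => (hgeo.mul_left c).tsum_eq
  have hray : ∀ φ : ℝ, |φ| = θ →
      HasSum (fun k : ℕ => ∫ x in Set.Ioi R, hk (α * k + α) (x + φ * Complex.I) • b ^ k)
       (∫ x in Set.Ioi R, FF α b (x + φ * Complex.I)) := by
    intro φ hφ
    refine hasSum_integral_of_dominated_convergence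
      (fun (k : ℕ) (x : ℝ) => ‖hk α (x + φ * Complex.I)‖ * (1 / 2) ^ k) ?_ ?_ ?_ ?_ ?_
    · intro k
      exact ((JJ_hk_int h1 h2 _ R hφ).smul_const _).aestronglyMeasurable
    · intro k
      refine (ae_restrict_iff' measurableSet_Ioi).2 (Eventually.of_forall fun x hx => ?_)
      exact hbd k _ (by simpa using le_of_lt hx)
    · exact Eventually.of_forall fun x => hgeo.summable.mul_left _
    · simp_rw [hts]
      exact (JJ_hk_int h1 h2 _ R hφ).norm.mul_const _
    · refine (ae_restrict_iff' measurableSet_Ioi).2 (Eventually.of_forall fun x hx => ?_)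
      exact hsum _ (by simpa using le_of_lt hx)
  have hcont : ∀ z, Continuous (fun y : ℝ => hk z (R + y * Complex.I)) := fun z => by
    unfold hk; fun_prop
  have hver : HasSum (fun k : ℕ => ∫ y in (-θ)..θ, hk (α * k + α) (R + y * Complex.I) • b ^ k)
       (∫ y in (-θ)..θ, FF α b (R + y * Complex.I)) := by
    refine intervalIntegral.hasSum_integral_of_dominated_convergence
      (fun (k : ℕ) (y : ℝ) => ‖hk α (R + y * Complex.I)‖ * (1 / 2) ^ k) ?_ ?_ ?_ ?_ ?_
    · intro k
      exact ((hcont _).smul continuous_const).aestronglyMeasurable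
    · intro k
      exact Eventually.of_forall fun y _ => hbd k _ (by simp)
    · exact Eventually.of_forall fun x _ => hgeo.summable.mul_left _
    · simp_rw [hts]
      exact ((hcont _).norm.mul continuous_const).intervalIntegrable _ _
    · exact Eventually.of_forall fun y _ => hsum _ (by simp)
  have := (hver.const_smul Complex.I).add ((hray θ (abs_of_nonneg hθ)).sub (hray (-θ) (by simp [abs_of_nonneg hθ])))
  refine this.congr_fun ?_ |> fun h => h
  intro k
  rw [← hankel h1 h2 (by positivity : 0 < α * k + α) R]
  unfold JJ
  rw [intervalIntegral.integral_smul_const, integral_smul_const, integral_smul_const, smul_smul, ← sub_smul,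
    ← add_smul, smul_eq_mul]

lemma ML_summable {α : ℝ} (hα : 0 < α) (r : ℝ) :
    Summable (fun k : ℕ => (Real.Gamma (α * k + α))⁻¹ * r ^ k) := by
  obtain ⟨R, hR⟩ : ∃ R : ℝ, 2 * ‖(r:ℂ)‖ + 1 ≤ Real.exp (α * R) := by
    refine ⟨Real.log (2 * ‖(r:ℂ)‖ + 1) / α, ?_⟩
    rw [mul_div_cancel₀ _ hα.ne', Real.exp_log (by positivity)]
  have h := (hasSum_JJ (θ := 3 * Real.pi / 4) (by linarith [Real.pi_pos]) (by linarith [Real.pi_pos]) hα (r:ℂ) R hR).summable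
  have h2 := h.mul_left (2 * Real.pi * Complex.I)⁻¹
  rw [← Complex.summable_ofReal]
  refine h2.congr fun k => ?_
  have : (2 * Real.pi * Complex.I) ≠ 0 := Complex.two_pi_I_ne_zero
  rw [smul_eq_mul, mul_assoc (2 * Real.pi * Complex.I), inv_mul_cancel_left₀ this]
  push_cast
  rfl

/-- complex Mittag-Leffler decay -/
lemma decay {θ α : ℝ} (h1 : Real.pi / 2 < θ) (h2 : θ < Real.pi) (hα : 0 < α) (a : 𝔸)
    (hs : ∀ ρ y : ℝ, 0 ≤ ρ → |y| ≤ θ → (ρ * Complex.exp (α * y * Complex.I) : ℂ) ∈ resolventSet ℂ a) :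
    ∃ C, 0 ≤ C ∧ ∀ t : ℝ, 0 < t →
      ‖∑' k : ℕ, (((Real.Gamma (α * k + α))⁻¹ : ℝ) : ℂ) • (((t ^ α : ℝ) : ℂ) • a) ^ k‖ ≤ C * (t ^ (-α)) ^ 2 := by
  have hθ : 0 ≤ θ := by linarith [Real.pi_pos]
  -- uniform bound on the resolvent
  obtain ⟨M, hM0, hM⟩ : ∃ M, 0 ≤ M ∧ ∀ ρ y : ℝ, 0 ≤ ρ → |y| ≤ θ →
      ‖resolvent a (ρ * Complex.exp (α * y * Complex.I) : ℂ)‖ ≤ M := by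
    have t1 := (spectrum.resolvent_tendsto_cobounded (𝕜 := ℂ) a).norm
    rw [norm_zero] at t1
    have t2 := t1.eventually (eventually_le_nhds (b := (1:ℝ)) one_pos)
    obtain ⟨r, hr⟩ : ∃ r : ℝ, ∀ z : ℂ, r ≤ ‖z‖ → ‖resolvent a z‖ ≤ 1 := by
      have := (Filter.hasBasis_cobounded_norm (E := ℂ)).eventually_iff.1 t2
      obtain ⟨r, _, hr⟩ := this
      exact ⟨r, fun z hz => hr hz⟩
    have hcont : ContinuousOn (fun p : ℝ × ℝ => ‖resolvent a (p.1 * Complex.exp (α * p.2 * Complex.I) : ℂ)‖)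
        (Set.Icc 0 r ×ˢ Set.Icc (-θ) θ) := by
      intro p hp
      have h3 := (spectrum.hasDerivAt_resolvent_const_left (hs p.1 p.2 hp.1.1 (abs_le.2 hp.2))).continuousAt
      have h4 : ContinuousAt (fun p : ℝ × ℝ => (p.1 * Complex.exp (α * p.2 * Complex.I) : ℂ)) p := by fun_prop
      exact (ContinuousAt.comp (f := fun p : ℝ × ℝ => (p.1 * Complex.exp (α * p.2 * Complex.I) : ℂ)) h3 h4).norm.continuousWithinAt
    obtain ⟨M, hM⟩ := ((isCompact_Icc.prod isCompact_Icc).image_of_continuousOn hcont).bddAbove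
    refine ⟨max 1 M, le_trans zero_le_one (le_max_left _ _), fun ρ y hρ hy => ?_⟩
    rcases le_total r ρ with h | h
    · refine (hr _ ?_).trans (le_max_left _ _)
      rw [norm_mul, Complex.norm_exp, Complex.norm_real, Real.norm_of_nonneg hρ]
      simpa using h
    · exact (hM ⟨(ρ, y), ⟨⟨hρ, h⟩, abs_le.1 hy⟩, rfl⟩).trans (le_max_right _ _)
  have h0 : (0:ℂ) ∈ resolventSet ℂ a := by simpa using hs 0 0 le_rfl (by simpa using hθ)
  have hdiff : ∀ z : ℂ, z ∈ resolventSet ℂ a → resolvent a z - resolvent a (0:ℂ) = -(z • (resolvent a z * resolvent a (0:ℂ))) := by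
    intro z hz
    obtain ⟨u, hu⟩ := hz
    obtain ⟨v, hv⟩ := h0
    unfold resolvent
    rw [← hu, ← hv, Ring.inverse_unit, Ring.inverse_unit]
    have : (z • (1:𝔸)) = u - v := by
      rw [hu, hv, map_zero, Algebra.algebraMap_eq_smul_one]; abel
    have e : z • ((↑u⁻¹ : 𝔸) * ↑v⁻¹) = ↑u⁻¹ * (z • (1:𝔸)) * ↑v⁻¹ := by simp
    rw [e, this, mul_sub, sub_mul]
    simp
  set r0 := ‖resolvent a (0:ℂ)‖ with hr0
  set L : ℝ := ∫ x : ℝ, ‖hk (-α) (x + θ * Complex.I)‖ with hL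
  have hL0 : 0 ≤ L := integral_nonneg fun x => norm_nonneg _
  refine ⟨(2 * Real.pi)⁻¹ * (2 * (M * r0 * L)), by positivity, fun t ht => ?_⟩
  set b : 𝔸 := ((t ^ α : ℝ) : ℂ) • a with hb
  have htα : (0:ℝ) < t ^ α := Real.rpow_pos_of_pos ht α
  set q : ℝ := t ^ (-α) with hq
  have hqp : 0 < q := Real.rpow_pos_of_pos ht _
  have hqi : t ^ α = q⁻¹ := by rw [hq, Real.rpow_neg ht.le, inv_inv]
  have hscale : ∀ z : ℂ, resolvent b z = (q:ℂ) • resolvent a ((q:ℂ) * z) := by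
    intro z
    have hqc : (q:ℂ) ≠ 0 := by exact_mod_cast hqp.ne'
    have := spectrum.units_smul_resolvent (r := Units.mk0 (q:ℂ) hqc) (s := (q:ℂ) * z) (a := a)
    rw [Units.smul_def, Units.val_mk0] at this
    rw [this]
    congr 1
    · rw [hb, hqi]; simp [Units.smul_def]
    · simp [Units.smul_def, hqc]
  have hpt : ∀ w : ℂ, (q:ℂ) * Complex.exp (α * w) = ((q * Real.exp (α * w.re) : ℝ) : ℂ) * Complex.exp (α * w.im * Complex.I) := by
    intro w
    conv_lhs => rw [← Complex.re_add_im w]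
    push_cast
    rw [mul_add, Complex.exp_add]; ring_nf
  have hmem : ∀ w : ℂ, |w.im| ≤ θ → (q:ℂ) * Complex.exp (α * w) ∈ resolventSet ℂ a := fun w hw => by
    rw [hpt]; exact hs _ _ (by positivity) hw
  -- the modified kernel
  set D : ℂ → 𝔸 := fun w => hk 0 w • ((q:ℂ) • (resolvent a ((q:ℂ) * Complex.exp (α * w)) - resolvent a (0:ℂ))) with hD
  have hFF : ∀ w, FF α b w = D w + hk 0 w • ((q:ℂ) • resolvent a (0:ℂ)) := by
    intro w
    simp only [FF, hD]
    rw [hscale, ← smul_add, ← smul_add, sub_add_cancel]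
  have hDd : ∀ w : ℂ, |w.im| ≤ θ → DifferentiableAt ℂ D w := by
    intro w hw
    have h3 := (spectrum.hasDerivAt_resolvent_const_left (hmem w hw)).differentiableAt
    have h4 : DifferentiableAt ℂ (fun w : ℂ => (q:ℂ) * Complex.exp (α * w)) w := by fun_prop
    have h5 := DifferentiableAt.comp w h3 h4
    exact (hk_diff 0 w).smul ((h5.sub_const _).const_smul (q:ℂ))
  have hDn : ∀ w : ℂ, |w.im| ≤ θ → ‖D w‖ ≤ (M * r0 * q ^ 2) * ‖hk (-α) w‖ := by
    intro w hw
    simp only [hD]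
    rw [hdiff _ (hmem w hw), norm_smul, norm_smul, norm_neg, norm_smul, norm_mul, Complex.norm_real, Real.norm_of_nonneg hqp.le]
    have e1 : ‖resolvent a ((q:ℂ) * Complex.exp (α * w)) * resolvent a (0:ℂ)‖ ≤ M * r0 := by
      refine (norm_mul_le _ _).trans ?_
      refine mul_le_mul_of_nonneg_right ?_ (norm_nonneg _)
      rw [hpt]; exact hM _ _ (by positivity) hw
    have e2 : ‖hk (-α) w‖ = ‖hk 0 w‖ * ‖Complex.exp (α * w)‖ := by
      rw [← norm_mul, ← zero_add (-α), hk_mul]; congr 3; push_cast; ring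
    rw [e2]
    calc ‖hk 0 w‖ * (q * (q * ‖Complex.exp (α * w)‖ * ‖resolvent a ((q:ℂ) * Complex.exp (α * w)) * resolvent a (0:ℂ)‖))
        ≤ ‖hk 0 w‖ * (q * (q * ‖Complex.exp (α * w)‖ * (M * r0))) := by gcongr
      _ = _ := by ring
  have hDb : ∀ R, ∃ C, ∀ w : ℂ, |w.im| = θ → R ≤ w.re → ‖D w‖ ≤ C * Real.exp (-w.re) := by
    intro R
    obtain ⟨C, hC⟩ := hk_b' h1 h2 (-α) R
    refine ⟨(M * r0 * q ^ 2) * C, fun w hw hR => (hDn w hw.le).trans ?_⟩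
    rw [mul_assoc _ C]
    exact mul_le_mul_of_nonneg_left (hC w hw hR) (by positivity)
  have hDl : ∀ w : ℂ, |w.im| ≤ θ → w.re ≤ 0 → ‖D w‖ ≤ ((M * r0 * q ^ 2) * Real.exp 1) * Real.exp ((1 + α) * w.re) := by
    intro w hw hw0
    refine (hDn w hw).trans ?_
    rw [mul_assoc _ (Real.exp 1)]
    refine mul_le_mul_of_nonneg_left ?_ (by positivity)
    simpa using hk_l (-α) w hw0
  obtain ⟨R, hR⟩ : ∃ R : ℝ, 2 * ‖b‖ + 1 ≤ Real.exp (α * R) := by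
    refine ⟨Real.log (2 * ‖b‖ + 1) / α, ?_⟩
    rw [mul_div_cancel₀ _ hα.ne', Real.exp_log (by positivity)]
  have hsum := hasSum_JJ h1 h2 hα b R hR
  -- JJ of FF equals JJ of D
  have hray : ∀ φ : ℝ, |φ| = θ → (∫ x in Set.Ioi R, FF α b (x + φ * Complex.I)) =
      (∫ x in Set.Ioi R, D (x + φ * Complex.I)) + (∫ x in Set.Ioi R, hk 0 (x + φ * Complex.I)) • ((q:ℂ) • resolvent a (0:ℂ)) := by
    intro φ hφ
    obtain ⟨C, hC⟩ := hDb R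
    have i1 : IntegrableOn (fun x : ℝ => D (x + φ * Complex.I)) (Set.Ioi R) :=
      ray_int (C := C) (fun x => hDd _ (by simp [hφ])) (fun x hx => by
      simpa using hC (x + φ * Complex.I) (by simp [hφ]) (by simpa using hx))
    simp_rw [hFF]
    rw [integral_add i1 ((JJ_hk_int h1 h2 _ R hφ).smul_const _), integral_smul_const]
  have hver : (∫ y in (-θ)..θ, FF α b (R + y * Complex.I)) = 
      (∫ y in (-θ)..θ, D (R + y * Complex.I)) + (∫ y in (-θ)..θ, hk 0 (R + y * Complex.I)) • ((q:ℂ) • resolvent a (0:ℂ)) := by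
    have c1 : ContinuousOn (fun y : ℝ => D (R + y * Complex.I)) (Set.uIcc (-θ) θ) := by
      intro y hy
      rw [Set.uIcc_of_le (by linarith)] at hy
      have h1 : ContinuousAt D (R + y * Complex.I) := (hDd _ (by simpa [abs_le] using hy)).continuousAt
      exact (ContinuousAt.comp (f := fun y : ℝ => (R:ℂ) + y * Complex.I) h1 (by fun_prop)).continuousWithinAt
    have c2 : Continuous (fun y : ℝ => hk 0 (R + y * Complex.I) • ((q:ℂ) • resolvent a (0:ℂ))) := by
      unfold hk; fun_prop
    simp_rw [hFF]
    rw [intervalIntegral.integral_add c1.intervalIntegrable (c2.intervalIntegrable _ _), intervalIntegral.integral_smul_const]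
  have hJ : JJ θ R (FF α b) = JJ θ R D := by
    have hz := hankel_zero h1 h2 R
    have : JJ θ R (FF α b) = JJ θ R D + JJ θ R (hk 0) • ((q:ℂ) • resolvent a (0:ℂ)) := by
      unfold JJ
      rw [hver, hray θ (abs_of_nonneg hθ), hray (-θ) (by simp [abs_of_nonneg hθ]), smul_add, add_smul, sub_smul,
        smul_eq_mul, mul_smul]
      abel
    rw [this, hz, zero_smul, add_zero]
  have hnorm : ‖JJ θ R D‖ ≤ 2 * (M * r0 * L) * q ^ 2 := by
    rw [JJ_lim hθ hDd hDb (δ := 1 + α) (by linarith) hDl R]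
    have hline : ∀ φ : ℝ, |φ| = θ → ‖∫ x : ℝ, D (x + φ * Complex.I)‖ ≤ (M * r0 * q ^ 2) * L := by
      intro φ hφ
      have hLφ : ∀ x : ℝ, ‖hk (-α) (x + φ * Complex.I)‖ = ‖hk (-α) (x + θ * Complex.I)‖ := by
        intro x
        rw [hk_norm, hk_norm]
        simp only [Complex.add_re, Complex.add_im, Complex.ofReal_re, Complex.ofReal_im, Complex.re_ofReal_mul, Complex.im_ofReal_mul,
          Complex.I_re, Complex.I_im, mul_zero, mul_one, add_zero, zero_add]
        rw [← Real.cos_abs φ, hφ]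
      rw [hL, ← integral_const_mul]
      obtain ⟨C, hC⟩ := hk_b' h1 h2 (-α) 0
      have hi : Integrable (fun x : ℝ => hk (-α) (x + θ * Complex.I)) :=
        line_int (C := C) (C' := Real.exp 1) (δ := 1 - (-α)) (by linarith) (fun x => hk_diff _ _) (fun x hx => by
          simpa using hC (x + θ * Complex.I) (by simp [abs_of_nonneg hθ]) (by simpa using hx))
          (fun x hx => by simpa using hk_l (-α) (x + θ * Complex.I) (by simpa using hx))
      refine norm_integral_le_of_norm_le (hi.norm.const_mul _) (Eventually.of_forall fun x => ?_)
      rw [← hLφ]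
      exact hDn _ (by simp [hφ])
    refine (norm_sub_le _ _).trans ?_
    have := hline θ (abs_of_nonneg hθ)
    have := hline (-θ) (by simp [abs_of_nonneg hθ])
    linarith
  have hfin : (∑' k : ℕ, (((Real.Gamma (α * k + α))⁻¹ : ℝ) : ℂ) • b ^ k) = (2 * Real.pi * Complex.I)⁻¹ • JJ θ R (FF α b) := by
    have h3 := hsum.const_smul (2 * Real.pi * Complex.I)⁻¹
    refine Eq.trans ?_ h3.tsum_eq
    congr 1
    ext k
    rw [smul_smul, inv_mul_cancel_left₀ Complex.two_pi_I_ne_zero]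
  rw [hfin, hJ, norm_smul, norm_inv, norm_mul, Complex.norm_I, mul_one, mul_assoc]
  have e : ‖(2 * Real.pi : ℂ)‖ = 2 * Real.pi := by
    rw [norm_mul, Complex.norm_real, Real.norm_of_nonneg Real.pi_pos.le]; simp
  rw [e]
  exact mul_le_mul_of_nonneg_left hnorm (by positivity)

end Banach

section MatrixPart

attribute [local instance] Matrix.linftyOpNormedSpace Matrix.linftyOpNormedAlgebra

lemma norm_mapC {s : ℕ} (M : Matrix (Fin s) (Fin s) ℝ) :
    ‖M.map (algebraMap ℝ ℂ)‖ = ‖M‖ := by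
  rw [Matrix.linfty_opNorm_def, Matrix.linfty_opNorm_def]
  simp

lemma gam_nonneg {α : ℝ} (hα : 0 < α) (k : ℕ) : 0 ≤ (Real.Gamma (α * k + α))⁻¹ :=
  inv_nonneg.2 (Real.Gamma_pos_of_pos (by positivity)).le

lemma ML_term_bound {α : ℝ} (hα : 0 < α) {s : ℕ} [Nonempty (Fin s)]
    (B : Matrix (Fin s) (Fin s) ℝ) (R : ℝ) (hB : ‖B‖ ≤ R) (k : ℕ) :
    ‖(Real.Gamma (α * k + α))⁻¹ • B ^ k‖ ≤ (Real.Gamma (α * k + α))⁻¹ * R ^ k := by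
  rw [norm_smul, Real.norm_of_nonneg (gam_nonneg hα k)]
  have := norm_pow_le B k
  have h2 := pow_le_pow_left₀ (norm_nonneg B) hB k
  exact mul_le_mul_of_nonneg_left (this.trans h2) (gam_nonneg hα k)

lemma ML_hasSum {α : ℝ} (hα : 0 < α) {s : ℕ} [Nonempty (Fin s)]
    (B : Matrix (Fin s) (Fin s) ℝ) :
    HasSum (fun k : ℕ => (Real.Gamma (α * k + α))⁻¹ • B ^ k) (ML α α B) :=
  (Summable.of_norm_bounded (ML_summable hα ‖B‖) (ML_term_bound hα B _ le_rfl)).hasSum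

lemma ML_map {α : ℝ} (hα : 0 < α) {s : ℕ} [Nonempty (Fin s)]
    (A : Matrix (Fin s) (Fin s) ℝ) (r : ℝ) :
    (ML α α (r • A)).map (algebraMap ℝ ℂ) =
      ∑' k : ℕ, (((Real.Gamma (α * k + α))⁻¹ : ℝ) : ℂ) • ((r : ℂ) • A.map (algebraMap ℝ ℂ)) ^ k := by
  have h := (ML_hasSum hα (r • A)).map ((algebraMap ℝ ℂ).mapMatrix (m := Fin s)).toAddMonoidHom
    (by
      refine (AddMonoidHomClass.isometry_of_norm _ ?_).continuous
      intro M
      exact norm_mapC M)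
  refine (h.tsum_eq.symm.trans ?_)
  congr 1
  funext k
  have e1 : ∀ (c : ℝ) (M : Matrix (Fin s) (Fin s) ℝ),
      (algebraMap ℝ ℂ).mapMatrix (c • M) = (c : ℂ) • (algebraMap ℝ ℂ).mapMatrix M := by
    intro c M; ext i j; simp
  change (algebraMap ℝ ℂ).mapMatrix ((Real.Gamma (α * k + α))⁻¹ • (r • A) ^ k) = _
  rw [e1, map_pow, e1]
  rfl

lemma ML_continuous {α : ℝ} (hα : 0 < α) {s : ℕ} [Nonempty (Fin s)] :
    Continuous (fun B : Matrix (Fin s) (Fin s) ℝ => ML α α B) := by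
  rw [continuous_iff_continuousAt]
  intro B
  have h : ContinuousOn (fun B : Matrix (Fin s) (Fin s) ℝ => ML α α B) (Metric.ball 0 (‖B‖ + 1)) := by
    unfold ML
    refine continuousOn_tsum (u := fun k : ℕ => (Real.Gamma (α * k + α))⁻¹ * (‖B‖ + 1) ^ k) ?_
      (ML_summable hα _) ?_
    · intro k; fun_prop
    · intro k x hx
      exact ML_term_bound hα x _ (by simpa using (mem_ball_zero_iff.1 hx).le) k
  exact h.continuousAt (Metric.isOpen_ball.mem_nhds (by simp))

lemma E_continuous {α : ℝ} (hα : 0 < α) {s : ℕ} [Nonempty (Fin s)]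
    (A : Matrix (Fin s) (Fin s) ℝ) : Continuous (fun u : ℝ => ML α α (u ^ α • A)) :=
  (ML_continuous hα).comp ((Real.continuous_rpow_const hα.le).smul continuous_const)

lemma theta_exists {α : ℝ} (hα : 0 < α) (S : Set ℂ) (hS : S.Finite)
    (h : ∀ μ ∈ S, μ ≠ 0 ∧ α * Real.pi / 2 < |Complex.arg μ|) :
    ∃ θ : ℝ, Real.pi / 2 < θ ∧ θ < Real.pi ∧ ∀ μ ∈ S, α * θ < |Complex.arg μ| := by
  have h1 : ∀ᶠ θ in 𝓝[>] (Real.pi / 2), ∀ μ ∈ S, α * θ < |Complex.arg μ| := by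
    rw [Filter.eventually_all_finite hS]
    intro μ hμ
    have : Tendsto (fun θ : ℝ => α * θ) (𝓝[>] (Real.pi / 2)) (𝓝 (α * (Real.pi / 2))) :=
      (Continuous.tendsto (by fun_prop) _).mono_left nhdsWithin_le_nhds
    exact this.eventually_lt_const (by have := (h μ hμ).2; linarith)
  have h2 : ∀ᶠ θ in 𝓝[>] (Real.pi / 2), θ ∈ Set.Ioo (Real.pi / 2) Real.pi :=
    Ioo_mem_nhdsGT (by linarith [Real.pi_pos])
  obtain ⟨θ, a, b⟩ := (h1.and h2).exists
  exact ⟨θ, b.1, b.2, a⟩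

lemma E_decay {α : ℝ} (hα : 0 < α) (hα1 : α < 1) {s : ℕ} [Nonempty (Fin s)]
    (A : Matrix (Fin s) (Fin s) ℝ)
    (hspec : ∀ μ ∈ spectrum ℂ (A.map (algebraMap ℝ ℂ)),
      μ ≠ 0 ∧ α * Real.pi / 2 < |Complex.arg μ|) :
    ∃ M : ℝ, 0 ≤ M ∧ (∀ u : ℝ, 0 ≤ u → ‖ML α α (u ^ α • A)‖ ≤ M) ∧
      ∀ u : ℝ, 0 < u → ‖ML α α (u ^ α • A)‖ ≤ M * (u ^ (-α)) ^ 2 := by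
  obtain ⟨θ, h1, h2, h3⟩ := theta_exists hα _ (Matrix.finite_spectrum (A.map (algebraMap ℝ ℂ))) hspec
  obtain ⟨C, hC, hd⟩ := decay (𝔸 := Matrix (Fin s) (Fin s) ℂ) h1 h2 hα (A.map (algebraMap ℝ ℂ)) (by
    intro ρ y hρ hy
    by_contra hn
    have hm : (ρ * Complex.exp (α * y * Complex.I) : ℂ) ∈ spectrum ℂ (A.map (algebraMap ℝ ℂ)) := hn
    have hne := (hspec _ hm).1
    have hlt := h3 _ hm
    have hρ' : 0 < ρ := by
      rcases hρ.eq_or_lt with h | h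
      · subst h; simp at hne
      · exact h
    have hy' : |α * y| ≤ α * θ := by
      rw [abs_mul, abs_of_pos hα]; exact mul_le_mul_of_nonneg_left hy hα.le
    have hb : α * θ < Real.pi := by
      have := Real.pi_pos
      nlinarith
    have harg : Complex.arg (ρ * Complex.exp (α * y * Complex.I)) = α * y := by
      have e : (α * y * Complex.I : ℂ) = ((α * y : ℝ) : ℂ) * Complex.I := by push_cast; ring
      rw [Complex.arg_real_mul _ hρ', e, Complex.arg_exp_mul_I]
      rw [toIocMod_eq_self]
      constructor <;> [skip; skip] <;> have := abs_le.1 hy' <;> linarith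
    rw [harg] at hlt
    linarith)
  obtain ⟨D, hD⟩ := (isCompact_Icc (a := (0:ℝ)) (b := 1)).exists_bound_of_continuousOn
    (E_continuous hα A).continuousOn
  have hd' : ∀ u : ℝ, 0 < u → ‖ML α α (u ^ α • A)‖ ≤ C * (u ^ (-α)) ^ 2 := by
    intro u hu
    rw [← norm_mapC, ML_map hα]
    exact hd u hu
  refine ⟨max C D, le_max_of_le_left hC, ?_, ?_⟩
  · intro u hu
    rcases le_or_gt u 1 with h | h
    · exact (hD u ⟨hu, h⟩).trans (le_max_right _ _)
    · refine (hd' u (by linarith)).trans (le_trans ?_ (le_max_left _ _))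
      have : u ^ (-α) ≤ 1 := Real.rpow_le_one_of_one_le_of_nonpos h.le (by linarith)
      have h0 : 0 ≤ u ^ (-α) := by positivity
      exact mul_le_of_le_one_right hC (pow_le_one₀ h0 this)
  · intro u hu
    exact (hd' u hu).trans (mul_le_mul_of_nonneg_right (le_max_left _ _) (by positivity))

end MatrixPart

section Analysis

lemma beta_int {α : ℝ} (hα : 0 < α) :
    IntervalIntegrable (fun u : ℝ => (1 - u) ^ (α - 1) * u ^ (α - 1)) volume 0 1 := by
  have h := (Complex.betaIntegral_convergent (u := (α : ℂ)) (v := (α : ℂ)) (by simpa) (by simpa)).norm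
  rw [intervalIntegrable_iff, Set.uIoc_of_le zero_le_one, integrableOn_Ioc_iff_integrableOn_Ioo] at *
  refine h.congr_fun ?_ measurableSet_Ioo
  intro u hu
  have h1 : 0 < 1 - u := by linarith [hu.2]
  have e1 : (1 - (u:ℂ)) = ((1 - u : ℝ) : ℂ) := by push_cast; ring
  have e2 : ((α:ℂ) - 1) = ((α - 1 : ℝ) : ℂ) := by push_cast; ring
  simp only [norm_mul]
  rw [e1, e2, Complex.norm_cpow_eq_rpow_re_of_pos hu.1, Complex.norm_cpow_eq_rpow_re_of_pos h1]
  simp [mul_comm]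

/-- convolution term -/
noncomputable def Vc {s : ℕ} (α : ℝ) (K : ℝ → Matrix (Fin s) (Fin s) ℝ) (h : ℝ → (Fin s → ℝ))
    (t : ℝ) : Fin s → ℝ :=
  ∫ τ in (0:ℝ)..t, (t - τ) ^ (α - 1) • (K (t - τ)).mulVec (h τ)

lemma Vc_subst {s : ℕ} (α : ℝ) (K : ℝ → Matrix (Fin s) (Fin s) ℝ) (h : ℝ → (Fin s → ℝ))
    (t : ℝ) : Vc α K h t =
      t • ∫ u in (0:ℝ)..1, (t - t * u) ^ (α - 1) • (K (t - t * u)).mulVec (h (t * u)) := by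
  have := intervalIntegral.smul_integral_comp_mul_left (a := 0) (b := 1)
    (fun τ => (t - τ) ^ (α - 1) • (K (t - τ)).mulVec (h τ)) t
  rw [mul_zero, mul_one] at this
  exact this.symm

lemma Vc_pt {s : ℕ} {α M C b : ℝ} (K : ℝ → Matrix (Fin s) (Fin s) ℝ)
    (h : ℝ → (Fin s → ℝ)) (hM : 0 ≤ M)
    (hKM : ∀ u : ℝ, 0 ≤ u → ‖K u‖ ≤ M)
    (hC : ∀ τ, 0 < τ → τ ≤ b → ‖h τ‖ ≤ C * τ ^ (α - 1)) (t u : ℝ) (ht : 0 < t) (htb : t ≤ b)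
    (hu : 0 < u) (hu1 : u < 1) :
    ‖(t - t * u) ^ (α - 1) • (K (t - t * u)).mulVec (h (t * u))‖ ≤
      M * C * (t ^ (α - 1)) ^ 2 * ((1 - u) ^ (α - 1) * u ^ (α - 1)) := by
  have h1 : 0 < 1 - u := by linarith
  have e : t - t * u = t * (1 - u) := by ring
  have htu : t * u ≤ b := by nlinarith
  have hh := hC (t * u) (by positivity) htu
  rw [Real.mul_rpow ht.le hu.le] at hh
  have hk := hKM (t * (1 - u)) (by positivity)
  have hv := Matrix.linfty_opNorm_mulVec (K (t * (1 - u))) (h (t * u))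
  rw [e, norm_smul, Real.norm_of_nonneg (by positivity), Real.mul_rpow ht.le h1.le]
  have p1 : 0 < t ^ (α - 1) := by positivity
  have p2 : 0 < (1 - u) ^ (α - 1) := by positivity
  calc _ ≤ t ^ (α - 1) * (1 - u) ^ (α - 1) * (M * (C * (t ^ (α - 1) * u ^ (α - 1)))) := by
        refine mul_le_mul_of_nonneg_left (hv.trans ?_) (by positivity)
        exact mul_le_mul hk hh (norm_nonneg _) hM
    _ = _ := by ring

lemma cont_mulVec {s : ℕ} {X : Type*} [TopologicalSpace X] {S : Set X}
    {K : X → Matrix (Fin s) (Fin s) ℝ} {h : X → (Fin s → ℝ)} (hK : ContinuousOn K S)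
    (hh : ContinuousOn h S) : ContinuousOn (fun x => (K x).mulVec (h x)) S := by
  have : Continuous (fun p : Matrix (Fin s) (Fin s) ℝ × (Fin s → ℝ) => p.1.mulVec p.2) := by
    fun_prop
  exact this.comp_continuousOn (hK.prodMk hh)

lemma Vc_meas {s : ℕ} {α : ℝ} (K : ℝ → Matrix (Fin s) (Fin s) ℝ) (hK : Continuous K)
    (h : ℝ → (Fin s → ℝ)) (hh : ContinuousOn h (Set.Ioi 0)) (t : ℝ) (ht : 0 < t) :
    ContinuousOn (fun τ => (t - τ) ^ (α - 1) • (K (t - τ)).mulVec (h τ)) (Set.Ioo 0 t) := by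
  have c1 : Continuous (fun τ => K (t - τ)) := by fun_prop
  have c2 : ContinuousOn h (Set.Ioo 0 t) := hh.mono (fun x hx => hx.1)
  have c3 : ContinuousOn (fun τ : ℝ => (t - τ) ^ (α - 1)) (Set.Ioo 0 t) := by
    refine ContinuousOn.rpow_const (by fun_prop) ?_
    intro x hx; left; linarith [hx.2]
  exact c3.smul (cont_mulVec c1.continuousOn c2)

lemma Vc_cont {s : ℕ} {α M : ℝ} (hα : 0 < α) (hα1 : α < 1) (K : ℝ → Matrix (Fin s) (Fin s) ℝ)
    (hK : Continuous K)
    (h : ℝ → (Fin s → ℝ)) (hh : ContinuousOn h (Set.Ioi 0)) (hM : 0 ≤ M)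
    (hKM : ∀ u : ℝ, 0 ≤ u → ‖K u‖ ≤ M)
    (hC : ∀ b : ℝ, ∃ C, 0 ≤ C ∧ ∀ τ, 0 < τ → τ ≤ b → ‖h τ‖ ≤ C * τ ^ (α - 1)) :
    ContinuousOn (Vc α K h) (Set.Ioi 0) := by
  intro t0 ht0
  have ht0 : 0 < t0 := ht0
  refine ContinuousAt.continuousWithinAt ?_
  obtain ⟨C, hC0, hC⟩ := hC (2 * t0)
  have key : ContinuousAt (fun t : ℝ => ∫ u in (0:ℝ)..1,
      (t - t * u) ^ (α - 1) • (K (t - t * u)).mulVec (h (t * u))) t0 := by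
    have hnb : Set.Ioo (t0 / 2) (2 * t0) ∈ 𝓝 t0 := Ioo_mem_nhds (by linarith) (by linarith)
    have hae : ∀ᵐ u : ℝ, u ≠ 1 := by simp [ae_iff, measure_singleton]
    refine intervalIntegral.continuousAt_of_dominated_interval
      (bound := fun u => M * C * ((t0 / 2) ^ (α - 1)) ^ 2 * ((1 - u) ^ (α - 1) * u ^ (α - 1)))
      ?_ ?_ ((beta_int hα).const_mul _) ?_
    · filter_upwards [hnb] with t ht
      have ht' : 0 < t := by linarith [ht.1]
      rw [Set.uIoc_of_le zero_le_one, ← restrict_Ioo_eq_restrict_Ioc]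
      refine ContinuousOn.aestronglyMeasurable ?_ measurableSet_Ioo
      refine (Vc_meas K hK h hh t ht').comp (f := fun u => t * u) (by fun_prop) ?_
      intro u hu
      exact ⟨mul_pos ht' hu.1, by have := hu.2; change t * u < t; nlinarith⟩
    · filter_upwards [hnb] with t ht
      have ht' : 0 < t := by linarith [ht.1]
      filter_upwards [hae] with u hu1 hu
      rw [Set.uIoc_of_le zero_le_one] at hu
      have hu1 : u < 1 := lt_of_le_of_ne hu.2 hu1
      refine (Vc_pt K h hM hKM hC t u ht' ht.2.le hu.1 hu1).trans ?_
      have : t ^ (α - 1) ≤ (t0 / 2) ^ (α - 1) :=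
        Real.rpow_le_rpow_of_nonpos (by linarith) ht.1.le (by linarith)
      have h1 : 0 ≤ 1 - u := by linarith
      have h0 := hu.1.le
      have : (t ^ (α - 1)) ^ 2 ≤ ((t0 / 2) ^ (α - 1)) ^ 2 := pow_le_pow_left₀ (by positivity) this 2
      gcongr
    · filter_upwards [hae] with u hu1 hu
      rw [Set.uIoc_of_le zero_le_one] at hu
      have hu1 : u < 1 := lt_of_le_of_ne hu.2 hu1
      have h1 : 0 < 1 - u := by linarith
      refine ContinuousOn.continuousAt (s := Set.Ioi 0) ?_ (Ioi_mem_nhds ht0)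
      have c1 : Continuous (fun t : ℝ => K (t - t * u)) := by fun_prop
      have c2 : ContinuousOn (fun t : ℝ => h (t * u)) (Set.Ioi 0) := by
        refine hh.comp (by fun_prop) ?_
        intro x hx; exact mul_pos hx hu.1
      have c3 : ContinuousOn (fun t : ℝ => (t - t * u) ^ (α - 1)) (Set.Ioi 0) := by
        refine ContinuousOn.rpow_const (by fun_prop) ?_
        intro x hx; left
        have hx : 0 < x := hx
        have : 0 < x * (1 - u) := mul_pos hx h1
        linarith
      exact c3.smul (cont_mulVec c1.continuousOn c2)
  have : Vc α K h = fun t => t • ∫ u in (0:ℝ)..1,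
      (t - t * u) ^ (α - 1) • (K (t - t * u)).mulVec (h (t * u)) := by
    funext t; exact Vc_subst α K h t
  rw [this]
  exact continuousAt_id.smul key

lemma Vc_lim {s : ℕ} {α M : ℝ} (hα : 0 < α) (K : ℝ → Matrix (Fin s) (Fin s) ℝ)
    (h : ℝ → (Fin s → ℝ)) (hM : 0 ≤ M)
    (hKM : ∀ u : ℝ, 0 ≤ u → ‖K u‖ ≤ M)
    (hC : ∀ b : ℝ, ∃ C, 0 ≤ C ∧ ∀ τ, 0 < τ → τ ≤ b → ‖h τ‖ ≤ C * τ ^ (α - 1)) :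
    Tendsto (fun t : ℝ => t ^ (1 - α) • Vc α K h t) (𝓝[>] 0) (𝓝 0) := by
  obtain ⟨C, hC0, hC⟩ := hC 1
  set B := ∫ u in (0:ℝ)..1, (1 - u) ^ (α - 1) * u ^ (α - 1) with hB
  have hlim : Tendsto (fun t : ℝ => M * C * B * t ^ α) (𝓝[>] 0) (𝓝 0) := by
    have : Continuous (fun t : ℝ => M * C * B * t ^ α) :=
      continuous_const.mul (Real.continuous_rpow_const hα.le)
    have := this.tendsto 0
    rw [Real.zero_rpow hα.ne', mul_zero] at this
    exact this.mono_left nhdsWithin_le_nhds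
  refine squeeze_zero_norm' ?_ hlim
  filter_upwards [Ioc_mem_nhdsGT (zero_lt_one' ℝ)] with t ht
  have ht0 : 0 < t := ht.1
  have hae : ∀ᵐ u : ℝ, u ≠ 1 := by simp [ae_iff, measure_singleton]
  have hb : ‖∫ u in (0:ℝ)..1, (t - t * u) ^ (α - 1) • (K (t - t * u)).mulVec (h (t * u))‖ ≤
      ∫ u in (0:ℝ)..1, M * C * (t ^ (α - 1)) ^ 2 * ((1 - u) ^ (α - 1) * u ^ (α - 1)) := by
    refine intervalIntegral.norm_integral_le_of_norm_le zero_le_one ?_ ((beta_int hα).const_mul _)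
    filter_upwards [hae] with u hu1 hu
    exact Vc_pt K h hM hKM hC t u ht0 ht.2 hu.1 (lt_of_le_of_ne hu.2 hu1)
  rw [intervalIntegral.integral_const_mul, ← hB] at hb
  rw [Vc_subst, norm_smul, norm_smul, Real.norm_of_nonneg ht0.le, Real.norm_of_nonneg (by positivity)]
  calc _ ≤ t ^ (1 - α) * (t * (M * C * (t ^ (α - 1)) ^ 2 * B)) := by gcongr
    _ = M * C * B * (t ^ (1 - α) * t ^ (α - 1) * (t * t ^ (α - 1))) := by ring
    _ = M * C * B * t ^ α := by
      have e1 : t ^ (1 - α) * t ^ (α - 1) = 1 := by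
        rw [← Real.rpow_add ht0]; simp
      have e2 : t * t ^ (α - 1) = t ^ α := by
        nth_rewrite 1 [← Real.rpow_one t]
        rw [← Real.rpow_add ht0]; congr 1; ring
      rw [e1, e2, one_mul]

lemma p_int {α : ℝ} (hα : 0 < α) :
    IntegrableOn (fun u : ℝ => min (u ^ (α - 1)) (u ^ (-1 - α))) (Set.Ioi 0) := by
  have hm : Measurable (fun u : ℝ => min (u ^ (α - 1)) (u ^ (-1 - α))) := by fun_prop
  rw [← Set.Ioc_union_Ioi_eq_Ioi zero_le_one]
  refine IntegrableOn.union ?_ ?_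
  · have h1 : IntervalIntegrable (fun u : ℝ => u ^ (α - 1)) volume 0 1 :=
      intervalIntegral.intervalIntegrable_rpow' (by linarith)
    rw [intervalIntegrable_iff_integrableOn_Ioc_of_le zero_le_one] at h1
    refine Integrable.mono' h1 hm.aestronglyMeasurable ?_
    filter_upwards [ae_restrict_mem measurableSet_Ioc] with u hu
    have := hu.1
    rw [Real.norm_of_nonneg (by positivity)]
    exact min_le_left _ _
  · have h1 := integrableOn_Ioi_rpow_of_lt (a := -1 - α) (c := 1) (by linarith) one_pos
    refine Integrable.mono' h1 hm.aestronglyMeasurable ?_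
    filter_upwards [ae_restrict_mem measurableSet_Ioi] with u hu
    have : 0 < u := lt_trans one_pos hu
    rw [Real.norm_of_nonneg (by positivity)]
    exact min_le_right _ _

lemma Vc_bdd {s : ℕ} {α M C : ℝ} (hα : 0 < α) (hα1 : α < 1) (K : ℝ → Matrix (Fin s) (Fin s) ℝ)
    (h : ℝ → (Fin s → ℝ)) (hM : 0 ≤ M) (hC0 : 0 ≤ C)
    (hKM : ∀ u : ℝ, 0 ≤ u → ‖K u‖ ≤ M)
    (hKd : ∀ u : ℝ, 0 < u → ‖K u‖ ≤ M * (u ^ (-α)) ^ 2)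
    (hC : ∀ τ, 0 < τ → ‖h τ‖ ≤ C * τ ^ (α - 1)) :
    ∃ D : ℝ, ∀ t : ℝ, 0 < t → t ^ (1 - α) * ‖Vc α K h t‖ ≤ D := by
  set p : ℝ → ℝ := fun u => min (u ^ (α - 1)) (u ^ (-1 - α)) with hp
  set P := ∫ u in Set.Ioi (0:ℝ), p u with hP
  have hpk : ∀ u, 0 < u → u ^ (α - 1) * ‖K u‖ ≤ M * p u := by
    intro u hu
    have a1 : u ^ (α - 1) * ‖K u‖ ≤ M * u ^ (α - 1) := by
      rw [mul_comm M]; exact mul_le_mul_of_nonneg_left (hKM u hu.le) (by positivity)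
    have a2 : u ^ (α - 1) * ‖K u‖ ≤ M * u ^ (-1 - α) := by
      calc _ ≤ u ^ (α - 1) * (M * (u ^ (-α)) ^ 2) := mul_le_mul_of_nonneg_left (hKd u hu) (by positivity)
        _ = M * (u ^ (α - 1) * u ^ (-α) * u ^ (-α)) := by ring
        _ = _ := by
          rw [← Real.rpow_add hu, ← Real.rpow_add hu]; congr 2; ring
    rw [hp]
    rcases min_choice (u ^ (α - 1)) (u ^ (-1 - α)) with e | e <;> simp only [e] <;> assumption
  have hK1 : ∀ u, 0 < u → ‖K u‖ ≤ M * u ^ (-α) := by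
    intro u hu
    have q : 0 < u ^ (-α) := by positivity
    rcases le_total (u ^ (-α)) 1 with e | e
    · refine (hKd u hu).trans (mul_le_mul_of_nonneg_left ?_ hM)
      nlinarith
    · exact (hKM u hu.le).trans (le_mul_of_one_le_right hM e)
  refine ⟨C * M * (2:ℝ)⁻¹ ^ (α - 1) * (P + (2:ℝ)⁻¹ ^ (-α) * α⁻¹), ?_⟩
  intro t ht
  have hpt : IntervalIntegrable p volume 0 t := by
    rw [intervalIntegrable_iff_integrableOn_Ioc_of_le ht.le]
    exact (p_int hα).mono_set (fun x hx => hx.1)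
  have hpt' : IntervalIntegrable (fun τ => p (t - τ)) volume 0 t := by
    have := (hpt.comp_sub_left t).symm
    simpa using this
  have hrt : IntervalIntegrable (fun τ : ℝ => τ ^ (α - 1)) volume 0 t :=
    intervalIntegral.intervalIntegrable_rpow' (by linarith)
  have hPle : ∫ τ in (0:ℝ)..t, p (t - τ) ≤ P := by
    rw [intervalIntegral.integral_comp_sub_left (fun x => p x) t, sub_self, sub_zero,
      intervalIntegral.integral_of_le ht.le]
    refine setIntegral_mono_set (p_int hα) ?_ (Eventually.of_forall fun x hx => hx.1)
    filter_upwards [ae_restrict_mem measurableSet_Ioi] with u hu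
    have : 0 < u := hu
    change 0 ≤ min _ _
    positivity
  have hae : ∀ᵐ u : ℝ, u ≠ t := by simp [ae_iff, measure_singleton]
  have hb : ‖Vc α K h t‖ ≤ ∫ τ in (0:ℝ)..t,
      C * M * (t / 2) ^ (α - 1) * (p (t - τ) + (t / 2) ^ (-α) * τ ^ (α - 1)) := by
    refine intervalIntegral.norm_integral_le_of_norm_le ht.le ?_
      ((hpt'.add (hrt.const_mul _)).const_mul _)
    filter_upwards [hae] with τ hτt hτ
    have h0 : 0 < τ := hτ.1
    have h1 : 0 < t - τ := by have := lt_of_le_of_ne hτ.2 hτt; linarith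
    have hp0 : 0 ≤ p (t - τ) := by change 0 ≤ min _ _; positivity
    rw [norm_smul, Real.norm_of_nonneg (by positivity)]
    have hv := Matrix.linfty_opNorm_mulVec (K (t - τ)) (h τ)
    have step : (t - τ) ^ (α - 1) * ‖(K (t - τ)).mulVec (h τ)‖ ≤
        C * ((t - τ) ^ (α - 1) * ‖K (t - τ)‖ * τ ^ (α - 1)) := by
      calc _ ≤ (t - τ) ^ (α - 1) * (‖K (t - τ)‖ * (C * τ ^ (α - 1))) := by
            refine mul_le_mul_of_nonneg_left (hv.trans ?_) (by positivity)
            exact mul_le_mul_of_nonneg_left (hC τ h0) (norm_nonneg _)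
        _ = _ := by ring
    refine step.trans ?_
    rw [mul_assoc C M, mul_assoc C]
    refine mul_le_mul_of_nonneg_left ?_ hC0
    rcases le_total τ (t / 2) with hc | hc
    · have a1 : (t - τ) ^ (α - 1) ≤ (t / 2) ^ (α - 1) :=
        Real.rpow_le_rpow_of_nonpos (by linarith) (by linarith) (by linarith)
      have a2 : (t - τ) ^ (-α) ≤ (t / 2) ^ (-α) :=
        Real.rpow_le_rpow_of_nonpos (by linarith) (by linarith) (by linarith)
      have a3 : ‖K (t - τ)‖ ≤ M * (t / 2) ^ (-α) :=
        (hK1 _ h1).trans (mul_le_mul_of_nonneg_left a2 hM)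
      calc _ ≤ (t / 2) ^ (α - 1) * (M * (t / 2) ^ (-α)) * τ ^ (α - 1) := by gcongr
        _ = M * (t / 2) ^ (α - 1) * (0 + (t / 2) ^ (-α) * τ ^ (α - 1)) := by ring
        _ ≤ _ := by gcongr
    · have a1 : τ ^ (α - 1) ≤ (t / 2) ^ (α - 1) :=
        Real.rpow_le_rpow_of_nonpos (by linarith) (by linarith) (by linarith)
      have a2 := hpk _ h1
      calc _ ≤ (M * p (t - τ)) * (t / 2) ^ (α - 1) := by gcongr
        _ = M * (t / 2) ^ (α - 1) * (p (t - τ) + 0) := by ring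
        _ ≤ _ := by gcongr; positivity
  rw [intervalIntegral.integral_const_mul, intervalIntegral.integral_add hpt' (hrt.const_mul _),
    intervalIntegral.integral_const_mul, integral_rpow (Or.inl (by linarith))] at hb
  have e0 : (t ^ (α - 1 + 1) - (0:ℝ) ^ (α - 1 + 1)) / (α - 1 + 1) = t ^ α * α⁻¹ := by
    rw [sub_add_cancel, Real.zero_rpow hα.ne', sub_zero, div_eq_mul_inv]
  have e1 : t ^ (1 - α) * t ^ (α - 1) = 1 := by
    rw [← Real.rpow_add ht]; simp
  have e2 : t ^ (-α) * t ^ α = 1 := by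
    rw [← Real.rpow_add ht]; simp
  rw [e0, div_eq_mul_inv t, Real.mul_rpow ht.le (by norm_num), Real.mul_rpow ht.le (by norm_num)] at hb
  have hb2 := mul_le_mul_of_nonneg_left hb (show 0 ≤ t ^ (1 - α) by positivity)
  refine hb2.trans ?_
  calc _ = C * M * (2:ℝ)⁻¹ ^ (α - 1) * (t ^ (1 - α) * t ^ (α - 1)) *
        ((∫ τ in (0:ℝ)..t, p (t - τ)) + (t ^ (-α) * t ^ α) * (2:ℝ)⁻¹ ^ (-α) * α⁻¹) := by ring
    _ ≤ _ := by
      rw [e1, e2, mul_one, one_mul]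
      gcongr

end Analysis

theorem stmt18 (α : ℝ) (hα0 : 0 < α) (hα1 : α < 1) (s : ℕ)
    (A : Matrix (Fin s) (Fin s) ℝ)
    (hspec : ∀ μ ∈ spectrum ℂ (A.map (algebraMap ℝ ℂ)),
      μ ≠ 0 ∧ α * Real.pi / 2 < |Complex.arg μ|)
    (Q : ℝ → Matrix (Fin s) (Fin s) ℝ) (hQc : ContinuousOn Q (Set.Ici 0))
    (hQbd : ∃ c : ℝ, ∀ t : ℝ, 0 ≤ t → ‖Q t‖ ≤ c)
    (g : ℝ → (Fin s → ℝ)) (hgc : ContinuousOn g (Set.Ici 0))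
    (hgint : ∃ C : ℝ, ∀ t : ℝ, 0 ≤ t →
      t ^ (1 - α) * ∫ τ in (0:ℝ)..t,
        (t - τ) ^ (α - 1) * ‖(ML α α ((t - τ) ^ α • A)).mulVec (g τ)‖ ≤ C)
    (x₀ : Fin s → ℝ) :
    ∀ ξ : ℝ → (Fin s → ℝ), memC0inf α ξ → memC0inf α (Tfull α A Q g x₀ ξ) := by
  intro ξ hξ
  rcases Nat.eq_zero_or_pos s with hs | hs
  · subst hs
    have h0 : ∀ x : Fin 0 → ℝ, x = 0 := fun x => Subsingleton.elim _ _
    refine ⟨?_, ⟨0, ?_⟩, ⟨0, ?_⟩⟩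
    · have : Tfull α A Q g x₀ ξ = fun _ => 0 := by funext t; exact h0 _
      rw [this]; exact continuousOn_const
    · have : (fun t : ℝ => t ^ (1 - α) • Tfull α A Q g x₀ ξ t) = fun _ => 0 := by
        funext t; exact h0 _
      rw [this]; exact tendsto_const_nhds
    · intro t _
      rw [h0 (Tfull α A Q g x₀ ξ t), norm_zero, mul_zero]
  have : Nonempty (Fin s) := ⟨⟨0, hs⟩⟩
  obtain ⟨M, hM, hKM, hKd⟩ := E_decay hα0 hα1 A hspec
  have hK := E_continuous hα0 A
  set K : ℝ → Matrix (Fin s) (Fin s) ℝ := fun u => ML α α (u ^ α • A) with hKdef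
  obtain ⟨hξc, -, Cξ, hξb⟩ := hξ
  obtain ⟨c, hc⟩ := hQbd
  obtain ⟨Cg, hCg⟩ := hgint
  set h : ℝ → (Fin s → ℝ) := fun τ => (Q τ).mulVec (ξ τ) with hh
  have hT : ∀ t, Tfull α A Q g x₀ ξ t =
      t ^ (α - 1) • (K t).mulVec x₀ + Vc α K h t + Vc α K g t := by
    intro t
    unfold Tfull Vc
    simp only [hh, Matrix.mulVec_mulVec, hKdef]
  have hc0 : 0 ≤ c := (norm_nonneg _).trans (hc 0 le_rfl)
  have hCξ0 : 0 ≤ Cξ := le_trans (by positivity) (hξb 1 zero_le_one)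
  have hhc : ContinuousOn h (Set.Ioi 0) :=
    cont_mulVec (hQc.mono Set.Ioi_subset_Ici_self) hξc
  have hhb : ∀ τ, 0 < τ → ‖h τ‖ ≤ c * Cξ * τ ^ (α - 1) := by
    intro τ hτ
    have e1 : τ ^ (α - 1) * τ ^ (1 - α) = 1 := by rw [← Real.rpow_add hτ]; simp
    have q : 0 < τ ^ (α - 1) := by positivity
    have a1 : ‖ξ τ‖ ≤ Cξ * τ ^ (α - 1) := by
      calc ‖ξ τ‖ = τ ^ (α - 1) * (τ ^ (1 - α) * ‖ξ τ‖) := by rw [← mul_assoc, e1, one_mul]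
        _ ≤ τ ^ (α - 1) * Cξ := mul_le_mul_of_nonneg_left (hξb τ hτ.le) q.le
        _ = _ := mul_comm _ _
    calc ‖h τ‖ ≤ ‖Q τ‖ * ‖ξ τ‖ := Matrix.linfty_opNorm_mulVec _ _
      _ ≤ c * (Cξ * τ ^ (α - 1)) := mul_le_mul (hc τ hτ.le) a1 (norm_nonneg _) hc0
      _ = _ := by ring
  have hhb' : ∀ b : ℝ, ∃ C, 0 ≤ C ∧ ∀ τ, 0 < τ → τ ≤ b → ‖h τ‖ ≤ C * τ ^ (α - 1) :=
    fun b => ⟨c * Cξ, by positivity, fun τ hτ _ => hhb τ hτ⟩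
  have hgb : ∀ b : ℝ, ∃ C, 0 ≤ C ∧ ∀ τ, 0 < τ → τ ≤ b → ‖g τ‖ ≤ C * τ ^ (α - 1) := by
    intro b
    obtain ⟨D, hD⟩ := (isCompact_Icc (a := (0:ℝ)) (b := b)).exists_bound_of_continuousOn
      (hgc.mono Set.Icc_subset_Ici_self)
    refine ⟨|D| * |b| ^ (1 - α), by positivity, fun τ hτ hτb => ?_⟩
    have hb0 : 0 < b := by linarith
    have e1 : b ^ (1 - α) * b ^ (α - 1) = 1 := by rw [← Real.rpow_add hb0]; simp
    have a1 : b ^ (α - 1) ≤ τ ^ (α - 1) :=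
      Real.rpow_le_rpow_of_nonpos hτ hτb (by linarith)
    rw [abs_of_pos hb0]
    calc ‖g τ‖ ≤ |D| := (hD τ ⟨hτ.le, hτb⟩).trans (le_abs_self _)
      _ = |D| * b ^ (1 - α) * b ^ (α - 1) := by rw [mul_assoc, e1, mul_one]
      _ ≤ _ := mul_le_mul_of_nonneg_left a1 (by positivity)
  have hgc' : ContinuousOn g (Set.Ioi 0) := hgc.mono Set.Ioi_subset_Ici_self
  have hKx : Continuous (fun t => (K t).mulVec x₀) := by
    rw [← continuousOn_univ]
    exact cont_mulVec hK.continuousOn continuousOn_const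
  refine ⟨?_, ⟨(K 0).mulVec x₀ + 0 + 0, ?_⟩, ?_⟩
  · have : Tfull α A Q g x₀ ξ =
        fun t => t ^ (α - 1) • (K t).mulVec x₀ + Vc α K h t + Vc α K g t := funext hT
    rw [this]
    have c3 : ContinuousOn (fun t : ℝ => t ^ (α - 1)) (Set.Ioi 0) := by
      refine ContinuousOn.rpow_const (by fun_prop) ?_
      intro x hx; left; exact ne_of_gt hx
    exact ((c3.smul hKx.continuousOn).add
      (Vc_cont hα0 hα1 K hK h hhc hM hKM hhb')).add (Vc_cont hα0 hα1 K hK g hgc' hM hKM hgb)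
  · have l1 : Tendsto (fun t => (K t).mulVec x₀) (𝓝[>] 0) (𝓝 ((K 0).mulVec x₀)) :=
      (hKx.tendsto 0).mono_left nhdsWithin_le_nhds
    refine Tendsto.congr' ?_ ((l1.add (Vc_lim hα0 K h hM hKM hhb')).add
      (Vc_lim hα0 K g hM hKM hgb))
    filter_upwards [self_mem_nhdsWithin] with t ht
    have ht : 0 < t := ht
    have e1 : t ^ (1 - α) * t ^ (α - 1) = 1 := by rw [← Real.rpow_add ht]; simp
    rw [hT, smul_add, smul_add, smul_smul, e1, one_smul]
  · obtain ⟨D, hD⟩ := Vc_bdd hα0 hα1 K h hM (mul_nonneg hc0 hCξ0) hKM hKd hhb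
    refine ⟨max 0 (M * ‖x₀‖ + D + Cg), fun t ht => ?_⟩
    rcases ht.eq_or_lt with h0 | ht
    · rw [← h0, Real.zero_rpow (by linarith), zero_mul]
      exact le_max_left _ _
    refine le_trans ?_ (le_max_right _ _)
    have e1 : t ^ (1 - α) * t ^ (α - 1) = 1 := by rw [← Real.rpow_add ht]; simp
    have p1 : 0 < t ^ (1 - α) := by positivity
    have b1 : t ^ (1 - α) * ‖t ^ (α - 1) • (K t).mulVec x₀‖ ≤ M * ‖x₀‖ := by
      rw [norm_smul, Real.norm_of_nonneg (by positivity), ← mul_assoc, e1, one_mul]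
      exact (Matrix.linfty_opNorm_mulVec _ _).trans
        (mul_le_mul_of_nonneg_right (hKM t ht.le) (norm_nonneg _))
    have b3 : t ^ (1 - α) * ‖Vc α K g t‖ ≤ Cg := by
      refine le_trans (mul_le_mul_of_nonneg_left ?_ p1.le) (hCg t ht.le)
      refine (intervalIntegral.norm_integral_le_integral_norm ht.le).trans (le_of_eq ?_)
      refine intervalIntegral.integral_congr ?_
      intro τ hτ
      rw [Set.uIcc_of_le ht.le] at hτ
      have : 0 ≤ t - τ := by linarith [hτ.2]
      change ‖_ • _‖ = _
      rw [norm_smul, Real.norm_of_nonneg (by positivity)]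
    rw [hT]
    have n1 := norm_add_le (t ^ (α - 1) • (K t).mulVec x₀ + Vc α K h t) (Vc α K g t)
    have n2 := norm_add_le (t ^ (α - 1) • (K t).mulVec x₀) (Vc α K h t)
    have b2 := hD t ht
    calc _ ≤ t ^ (1 - α) * (‖t ^ (α - 1) • (K t).mulVec x₀‖ + ‖Vc α K h t‖ + ‖Vc α K g t‖) :=
          mul_le_mul_of_nonneg_left (by linarith) p1.le
      _ ≤ _ := by rw [mul_add, mul_add]; linarith
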